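/- arXiv:1712.06078 — 2 statements merged into one kernel-verified Lean document; each statement's English description precedes it below -/
import Mathlib

section
/- Let G be a connected finite simple graph on the vertex set [n] = {1,…,n}. Then Ω(P_G) = conv((P_G × {1}) ∪ ((−P_G) × {−1})) ⊂ ℝ^{n+1} has the integer decomposition property (is normal) if and only if G does not contain two vertex-disjoint odd cycles. -/
/-- `P × {1} ⊆ ℝ^{d+1}`. -/
def liftTop {d : ℕ} (P : Set (Fin d → ℝ)) : Set (Fin (d + 1) → ℝ) :=
  (fun p => Fin.snoc p (1 : ℝ)) '' P

/-- `(−Q) × {−1} ⊆ ℝ^{d+1}`. -/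
def liftBot {d : ℕ} (Q : Set (Fin d → ℝ)) : Set (Fin (d + 1) → ℝ) :=
  (fun q => Fin.snoc (-q) (-1 : ℝ)) '' Q

/-- `Ω(P,Q) = conv((P × {1}) ∪ ((−Q) × {−1})) ⊆ ℝ^{d+1}`. -/
def Omega {d : ℕ} (P Q : Set (Fin d → ℝ)) : Set (Fin (d + 1) → ℝ) :=
  convexHull ℝ (liftTop P ∪ liftBot Q)

/-- The edge polytope of a finite simple graph `G` on the vertex set `Fin n`:
the convex hull of the vectors `e_i + e_j` for the edges `{i,j}` of `G`. -/
def edgePolytope {n : ℕ} (G : SimpleGraph (Fin n)) : Set (Fin n → ℝ) :=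
  convexHull ℝ {x | ∃ i j : Fin n, G.Adj i j ∧ x = Pi.single i 1 + Pi.single j 1}

/-- A point of `ℝ^m` is a lattice point if all of its coordinates are integers. -/
def IsLatticePt {m : ℕ} (x : Fin m → ℝ) : Prop := ∀ i, ∃ z : ℤ, x i = (z : ℝ)

/-- A lattice polytope `P ⊆ ℝ^m` has the integer decomposition property (is normal)
if every lattice point of `N·P` is a sum of `N` lattice points of `P`. -/
def HasIDP {m : ℕ} (P : Set (Fin m → ℝ)) : Prop :=
  ∀ N : ℕ, 1 ≤ N → ∀ x : Fin m → ℝ,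
    x ∈ (fun y => (N : ℝ) • y) '' P → IsLatticePt x →
      ∃ f : Fin N → (Fin m → ℝ),
        (∀ k, f k ∈ P ∧ IsLatticePt (f k)) ∧ x = ∑ k, f k


namespace OmegaIDP

open SimpleGraph Finset

/-- A walk is a path or splits off a nonempty closed walk. -/
lemma path_or_split {V : Type*} {G : SimpleGraph V} {u v : V} (p : G.Walk u v) :
    p.IsPath ∨ ∃ (x : V) (a : G.Walk u x) (b : G.Walk x x) (c : G.Walk x v),
      p.length = a.length + b.length + c.length ∧ 0 < b.length := by
  classical
  induction p with
  | nil => left; simp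
  | @cons u y v h q ih =>
    rcases ih with hq | ⟨x, a, b, c, hl, hb⟩
    · by_cases hu : u ∈ q.support
      · right
        refine ⟨u, Walk.nil, Walk.cons h (q.takeUntil u hu), q.dropUntil u hu, ?_, by simp⟩
        have := congrArg Walk.length (q.take_spec hu)
        rw [Walk.length_append] at this
        simp only [Walk.length_cons, Walk.length_nil]
        omega
      · left
        exact (Walk.cons_isPath_iff h q).2 ⟨hq, hu⟩
    · right
      refine ⟨x, Walk.cons h a, b, c, ?_, hb⟩
      simp only [Walk.length_cons]
      omega

/-- An odd closed walk yields an odd cycle. -/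
lemma exists_odd_cycle_of_odd_loop {V : Type*} {G : SimpleGraph V} (m : ℕ) :
    ∀ (u : V) (p : G.Walk u u), p.length = m → Odd m →
      ∃ (x : V) (c : G.Walk x x), c.IsCycle ∧ Odd c.length := by
  induction m using Nat.strong_induction_on with
  | _ m ih =>
    intro u p hp hm
    cases p with
    | nil => simp at hp; subst hp; simp at hm
    | @cons _ v _ h q =>
      rcases path_or_split q with hq | ⟨x, a, b, c, hl, hb⟩
      · refine ⟨u, Walk.cons h q, ?_, by rw [hp]; exact hm⟩
        rw [Walk.cons_isCycle_iff]
        refine ⟨hq, fun he => ?_⟩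
        cases q with
        | nil => exact h.ne rfl
        | @cons _ y _ h' r =>
          rw [Walk.cons_isPath_iff] at hq
          rw [Walk.edges_cons, List.mem_cons] at he
          rcases he with he | he
          · have huy : u = y := by
              rcases Sym2.eq_iff.1 he with ⟨h1, h2⟩ | ⟨h1, h2⟩
              · exact absurd h1 h.ne
              · exact h1
            subst huy
            have : r = Walk.nil := Walk.eq_nil_iff_nil.2 (Walk.isPath_iff_nil.1 hq.1)
            subst this
            simp at hp
            subst hp
            exact absurd hm (by decide)
          · exact hq.2 (Walk.snd_mem_support_of_mem_edges r he)
      · rw [Walk.length_cons] at hp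
        by_cases hbo : Odd b.length
        · exact ih b.length (by omega) x b rfl hbo
        · refine ih (a.length + c.length + 1) (by omega) u (Walk.cons h (a.append c)) ?_ ?_
          · simp
          · rw [Nat.not_odd_iff_even] at hbo
            rw [Nat.odd_iff] at *
            rw [Nat.even_iff] at hbo
            omega

section core
variable {V : Type*} [Fintype V] [DecidableEq V]

/-- Vertex sum of an edge weighting. -/
noncomputable def vs (w : Sym2 V → ℝ) (v : V) : ℝ := ∑ e : Sym2 V, if v ∈ e then w e else 0

lemma sum_mul_vs (w : Sym2 V → ℝ) (g : V → ℝ) :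
    ∑ v, g v * vs w v = ∑ e : Sym2 V, w e * ∑ v, if v ∈ e then g v else 0 := by
  simp only [vs, Finset.mul_sum]
  rw [Finset.sum_comm]
  refine Finset.sum_congr rfl fun e _ => Finset.sum_congr rfl fun v _ => ?_
  split_ifs <;> ring

lemma sum_mem_edge (a b : V) (h : a ≠ b) (g : V → ℝ) :
    (∑ v, if v ∈ s(a, b) then g v else 0) = g a + g b := by
  rw [← Finset.sum_filter]
  have : (Finset.univ.filter fun v => v ∈ s(a, b)) = {a, b} := by
    ext v; simp
  rw [this, Finset.sum_pair h]

lemma two_mul_sum (G : SimpleGraph V) (w : Sym2 V → ℝ) (hw : ∀ e, w e ≠ 0 → e ∈ G.edgeSet) :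
    ∑ v, vs w v = 2 * ∑ e, w e := by
  have := sum_mul_vs w (fun _ => 1)
  simp only [one_mul] at this
  rw [this, Finset.mul_sum]
  refine Finset.sum_congr rfl fun e _ => ?_
  by_cases he : w e = 0
  · simp [he]
  · have h := hw e he
    induction e with
    | _ a b =>
      rw [sum_mem_edge a b (G.ne_of_adj h)]; ring

lemma core_aux (H : SimpleGraph V) [DecidableRel H.Adj] (φ : Sym2 V → ℝ)
    (h1 : ∀ e, φ e < 1)
    (hpos : ∀ e ∈ H.edgeSet, 0 < φ e) (hzero : ∀ e, e ∉ H.edgeSet → φ e = 0)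
    (hIntg : ∀ v, ∃ z : ℤ, vs φ v = z)
    (hS : ∃ z : ℤ, ∑ e, φ e = z)
    (hker : ∀ k : Sym2 V → ℝ, (∀ e, k e ≠ 0 → e ∈ H.edgeSet) → (∀ v, vs k v = 0) → k = 0)
    (a₀ b₀ : V) (hab : H.Adj a₀ b₀) :
    ∃ (v w : V) (c : H.Walk v v) (c' : H.Walk w w),
      c.IsCycle ∧ c'.IsCycle ∧ Odd c.length ∧ Odd c'.length ∧
      ∀ x ∈ c.support, x ∉ c'.support := by
  classical
  have hvs : ∀ (k : Sym2 V → ℝ), (∀ e, k e ≠ 0 → e ∈ H.edgeSet) → ∀ v,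
      vs k v = ∑ e ∈ H.incidenceFinset v, k e := by
    intro k hk v
    rw [vs, ← Finset.sum_filter]
    symm
    apply Finset.sum_subset
    · intro e he
      rw [mem_incidenceFinset] at he
      simp [he.2]
    · intro e he he'
      by_contra hne
      exact he' ((mem_incidenceFinset _ _ _).2 ⟨hk e hne, by simpa using he⟩)
  have hφs : ∀ e, φ e ≠ 0 → e ∈ H.edgeSet := fun e he => by
    by_contra h; exact he (hzero e h)
  -- degree bounds
  have hbound : ∀ v, 0 < H.degree v → 0 < vs φ v ∧ vs φ v < H.degree v := by
    intro v hv
    rw [hvs φ hφs v]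
    have hne : (H.incidenceFinset v).Nonempty := by
      rw [← Finset.card_pos, card_incidenceFinset_eq_degree]; exact hv
    refine ⟨Finset.sum_pos (fun e he => hpos e ((mem_incidenceFinset _ _ _).1 he).1) hne, ?_⟩
    calc ∑ e ∈ H.incidenceFinset v, φ e < ∑ e ∈ H.incidenceFinset v, (1 : ℝ) :=
          Finset.sum_lt_sum_of_nonempty hne fun e _ => h1 e
      _ = H.degree v := by simp
  have hdeg2 : ∀ v, 0 < H.degree v → 2 ≤ H.degree v := by
    intro v hv
    obtain ⟨hb1, hb2⟩ := hbound v hv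
    obtain ⟨z, hz⟩ := hIntg v
    rw [hz] at hb1 hb2
    have h1 : 0 < z := by exact_mod_cast hb1
    have h2 : z < H.degree v := by exact_mod_cast hb2
    omega
  -- the linear map
  let Vh := {v : V // 0 < H.degree v}
  let A : (H.edgeSet → ℝ) →ₗ[ℝ] (Vh → ℝ) :=
    { toFun := fun x v => ∑ e : H.edgeSet, if v.1 ∈ e.1 then x e else 0
      map_add' := by
        intro x y; ext v
        simp only [Pi.add_apply, ← Finset.sum_add_distrib]
        refine Finset.sum_congr rfl fun e _ => ?_
        split_ifs <;> simp
      map_smul' := by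
        intro c x; ext v
        simp only [Pi.smul_apply, RingHom.id_apply, smul_eq_mul, Finset.mul_sum]
        refine Finset.sum_congr rfl fun e _ => ?_
        split_ifs <;> simp }
  let ex : (H.edgeSet → ℝ) → Sym2 V → ℝ := fun x e => if h : e ∈ H.edgeSet then x ⟨e, h⟩ else 0
  have hexs : ∀ x e, ex x e ≠ 0 → e ∈ H.edgeSet := by
    intro x e he
    by_contra h
    exact he (by simp only [ex]; rw [dif_neg h])
  have hexA : ∀ x (v : Vh), vs (ex x) v.1 = A x v := by
    intro x v
    show _ = ∑ e : H.edgeSet, if v.1 ∈ e.1 then x e else 0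
    have h := Finset.sum_subtype (F := (inferInstance : Fintype H.edgeSet)) (p := fun e => e ∈ H.edgeSet) H.edgeFinset
      (fun e => by simp) (fun e => if v.1 ∈ e then ex x e else 0)
    have h2 : vs (ex x) v.1 = ∑ e ∈ H.edgeFinset, if v.1 ∈ e then ex x e else 0 := by
      rw [vs]; symm
      apply Finset.sum_subset (Finset.subset_univ _)
      intro e _ he
      have : ex x e = 0 := by
        by_contra h; exact he (by simpa using hexs x e h)
      simp [this]
    rw [h2, h]
    refine Finset.sum_congr (by congr) fun e _ => ?_
    have : ex x e.1 = x e := by simp only [ex]; rw [dif_pos e.2]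
    rw [this]
  have hvs0 : ∀ (k : Sym2 V → ℝ), (∀ e, k e ≠ 0 → e ∈ H.edgeSet) → ∀ v, H.degree v = 0 →
      vs k v = 0 := by
    intro k hk v hv
    rw [hvs k hk v]
    have : H.incidenceFinset v = ∅ := by
      rw [← Finset.card_eq_zero, card_incidenceFinset_eq_degree]; exact hv
    rw [this]; simp
  have hAinj : Function.Injective A := by
    rw [injective_iff_map_eq_zero]
    intro x hx
    have hk := hker (ex x) (hexs x) (by
      intro v
      by_cases hv : 0 < H.degree v
      · rw [hexA x ⟨v, hv⟩, hx]; rfl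
      · exact hvs0 _ (hexs x) v (by omega))
    ext e
    have := congrFun hk e.1
    simp only [ex] at this
    rw [dif_pos e.2] at this
    simpa using this
  have hle := LinearMap.finrank_le_finrank_of_injective hAinj
  have hVcard : Fintype.card Vh = (univ.filter fun v => 0 < H.degree v).card :=
    Fintype.card_subtype _
  have hEcard : Fintype.card H.edgeSet = H.edgeFinset.card := by
    rw [edgeFinset_card]
  have hsumdeg : ∑ v ∈ univ.filter (fun v => 0 < H.degree v), H.degree v
      = 2 * H.edgeFinset.card := by
    rw [← sum_degrees_eq_twice_card_edges]
    apply Finset.sum_subset (Finset.subset_univ _)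
    intro v _ hv
    simpa using hv
  have hsum2 : ∑ v ∈ univ.filter (fun v => 0 < H.degree v), 2
      ≤ ∑ v ∈ univ.filter (fun v => 0 < H.degree v), H.degree v :=
    Finset.sum_le_sum fun v hv => hdeg2 v (by simpa using hv)
  rw [Module.finrank_fintype_fun_eq_card, Module.finrank_fintype_fun_eq_card, hVcard,
    hEcard] at hle
  have hcardeq : H.edgeFinset.card = (univ.filter fun v => 0 < H.degree v).card := by
    have h := hsum2
    rw [hsumdeg, Finset.sum_const, smul_eq_mul] at h
    omega
  have hreg : ∀ v, 0 < H.degree v → H.degree v = 2 := by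
    have h : ∑ v ∈ univ.filter (fun v => 0 < H.degree v), 2
      = ∑ v ∈ univ.filter (fun v => 0 < H.degree v), H.degree v := by
      rw [hsumdeg, hcardeq, Finset.sum_const, smul_eq_mul, mul_comm]
    rw [Finset.sum_eq_sum_iff_of_le (fun v hv => hdeg2 v (by simpa using hv))] at h
    intro v hv
    exact (h v (by simpa using hv)).symm
  -- all weights are one half
  have hhalf : ∀ e ∈ H.edgeSet, φ e = 1 / 2 := by
    have hk := hker (fun e => if e ∈ H.edgeSet then φ e - 1 / 2 else 0)
      (fun e he => by by_contra h; simp [h] at he) (by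
      intro v
      have hs : ∀ e, (if e ∈ H.edgeSet then φ e - 1 / 2 else 0) ≠ 0 → e ∈ H.edgeSet :=
        fun e he => by by_contra h; simp [h] at he
      by_cases hv : 0 < H.degree v
      · rw [hvs _ hs v]
        have : ∑ e ∈ H.incidenceFinset v, (if e ∈ H.edgeSet then φ e - 1 / 2 else 0)
            = ∑ e ∈ H.incidenceFinset v, (φ e - 1 / 2) :=
          Finset.sum_congr rfl fun e he => by
            rw [if_pos ((mem_incidenceFinset _ _ _).1 he).1]
        rw [this, Finset.sum_sub_distrib, ← hvs φ hφs, Finset.sum_const,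
          card_incidenceFinset_eq_degree, hreg v hv]
        obtain ⟨hb1, hb2⟩ := hbound v hv
        obtain ⟨z, hz⟩ := hIntg v
        rw [hreg v hv] at hb2
        rw [hz] at hb1 hb2 ⊢
        have h1 : 0 < z := by exact_mod_cast hb1
        have h2 : z < 2 := by exact_mod_cast hb2
        have : z = 1 := by omega
        subst this
        norm_num
      · exact hvs0 _ hs v (by omega))
    intro e he
    have := congrFun hk e
    simp only [he, if_true, Pi.zero_apply] at this
    linarith
  have heven : Even H.edgeFinset.card := by
    obtain ⟨z, hz⟩ := hS
    have : ∑ e, φ e = ∑ e ∈ H.edgeFinset, (1 / 2 : ℝ) := by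
      rw [← Finset.sum_subset (Finset.subset_univ H.edgeFinset)
        (fun e _ he => hzero e (by simpa using he))]
      exact Finset.sum_congr rfl fun e he => hhalf e (by simpa using he)
    rw [this, Finset.sum_const, nsmul_eq_mul] at hz
    have h : ((H.edgeFinset.card : ℤ) : ℝ) = ((2 * z : ℤ) : ℝ) := by push_cast; linarith
    have h' : (H.edgeFinset.card : ℤ) = 2 * z := by exact_mod_cast h
    rw [Nat.even_iff]; omega
  -- no balanced function
  have hAsurj : Function.Surjective A := by
    refine (LinearMap.injective_iff_surjective_of_finrank_eq_finrank ?_).1 hAinj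
    rw [Module.finrank_fintype_fun_eq_card, Module.finrank_fintype_fun_eq_card, hVcard,
      hEcard, hcardeq]
  have hdual : ∀ g : V → ℝ, (∀ a b, H.Adj a b → g a + g b = 0) →
      ∀ v, 0 < H.degree v → g v = 0 := by
    intro g hg v hv
    obtain ⟨x, hx⟩ := hAsurj (fun v => g v.1)
    have h0 : ∑ v, g v * vs (ex x) v = 0 := by
      rw [sum_mul_vs]
      refine Finset.sum_eq_zero fun e _ => ?_
      by_cases he : e ∈ H.edgeSet
      · induction e with
        | _ a b => rw [sum_mem_edge a b (H.ne_of_adj he), hg a b he, mul_zero]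
      · have : ex x e = 0 := by
          by_contra h; exact he (hexs x e h)
        rw [this, zero_mul]
    rw [Finset.sum_eq_zero_iff_of_nonneg] at h0
    · have := h0 v (Finset.mem_univ v)
      rw [hexA x ⟨v, hv⟩, hx] at this
      simpa using this
    · intro v _
      by_cases hv : 0 < H.degree v
      · rw [hexA x ⟨v, hv⟩, hx]; exact mul_self_nonneg _
      · rw [hvs0 _ (hexs x) v (by omega), mul_zero]
  -- odd cycles in closed sets
  have hodd : ∀ S : Set V, (∀ a b, H.Adj a b → a ∈ S → b ∈ S) → (∃ v ∈ S, 0 < H.degree v) →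
      ∃ (x : V) (c : H.Walk x x), c.IsCycle ∧ Odd c.length ∧ ∀ y ∈ c.support, y ∈ S := by
    intro S hcl ⟨v, hvS, hv⟩
    let K : SimpleGraph V :=
      { Adj := fun a b => H.Adj a b ∧ a ∈ S ∧ b ∈ S
        symm := ⟨fun a b h => ⟨h.1.symm, h.2.2, h.2.1⟩⟩
        loopless := ⟨fun a h => H.ne_of_adj h.1 rfl⟩ }
    have hK : K ≤ H := fun a b h => h.1
    have hncol : ¬ K.Colorable 2 := by
      rintro ⟨C⟩
      have := hdual (fun u => if u ∈ S then (if C u = 0 then 1 else -1) else 0) (by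
        intro a b hab
        by_cases ha : a ∈ S
        · have hb := hcl a b hab ha
          have hC : C a ≠ C b := C.valid ⟨hab, ha, hb⟩
          simp only [ha, hb, if_true]
          by_cases h0 : C a = 0 <;> by_cases h0' : C b = 0
          · exact absurd (h0.trans h0'.symm) hC
          · simp [h0, h0']
          · simp [h0, h0']
          · omega
        · have hb : b ∉ S := fun hb => ha (hcl b a hab.symm hb)
          simp [ha, hb]) v hv
      simp only [hvS, if_true] at this
      split_ifs at this <;> norm_num at this
    rw [two_colorable_iff_forall_loop_even] at hncol
    push Not at hncol
    obtain ⟨u, p, hp⟩ := hncol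
    rw [Nat.not_even_iff_odd] at hp
    obtain ⟨x, c, hc, hco⟩ := exists_odd_cycle_of_odd_loop _ u p rfl hp
    refine ⟨x, c.mapLe hK, (Walk.isCycle_mapLe hK).2 hc, by simpa using hco, ?_⟩
    intro y hy
    rw [Walk.support_mapLe_eq_support] at hy
    have h2 := hc.ncard_neighborSet_toSubgraph_eq_two hy
    have hne : (c.toSubgraph.neighborSet y).Nonempty := by
      rw [Set.nonempty_iff_ne_empty]; intro h; rw [h] at h2; simp at h2
    obtain ⟨z, hz⟩ := hne
    exact (c.toSubgraph.adj_sub hz).2.1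
  have hadjdeg : ∀ a b, H.Adj a b → 0 < H.degree a := fun a b h => by
    rw [degree_pos_iff_exists_adj]; exact ⟨b, h⟩
  obtain ⟨x, c, hc, hco, -⟩ := hodd Set.univ (fun _ _ _ _ => trivial)
    ⟨a₀, trivial, hadjdeg _ _ hab⟩
  have hccl : ∀ a b, H.Adj a b → a ∈ c.support → b ∈ c.support := by
    intro a b hab ha
    have h2 := hc.ncard_neighborSet_toSubgraph_eq_two ha
    have hsub : c.toSubgraph.neighborSet a ⊆ H.neighborSet a :=
      c.toSubgraph.neighborSet_subset a
    have heq : c.toSubgraph.neighborSet a = H.neighborSet a := by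
      apply Set.eq_of_subset_of_ncard_le hsub _ (Set.toFinite _)
      rw [h2, Set.ncard_eq_toFinset_card']
      have := hreg a (hadjdeg _ _ hab)
      rw [← card_neighborFinset_eq_degree, neighborFinset] at this
      exact this.le
    have hb : b ∈ c.toSubgraph.neighborSet a := by rw [heq]; exact hab
    have := c.toSubgraph.edge_vert (c.toSubgraph.adj_symm hb)
    exact (Walk.mem_verts_toSubgraph c).1 this
  have hcpos : ∀ a ∈ c.support, 0 < H.degree a := by
    intro a ha
    have h2 := hc.ncard_neighborSet_toSubgraph_eq_two ha
    have hne : (c.toSubgraph.neighborSet a).Nonempty := by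
      rw [Set.nonempty_iff_ne_empty]; intro h; rw [h] at h2; simp at h2
    obtain ⟨z, hz⟩ := hne
    exact hadjdeg a z (c.toSubgraph.adj_sub hz)
  have hcard : c.support.toFinset.card = c.length := by
    have htail : c.support.toFinset = c.support.tail.toFinset := by
      ext a
      simp only [List.mem_toFinset]
      constructor
      · intro ha
        rw [Walk.mem_support_iff] at ha
        rcases ha with rfl | ha
        · exact Walk.end_mem_tail_support hc.not_nil
        · exact ha
      · exact List.mem_of_mem_tail
    rw [htail, List.toFinset_card_of_nodup hc.support_nodup]
    simp
  have hex : ∃ v, v ∉ c.support ∧ 0 < H.degree v := by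
    by_contra hcon
    push Not at hcon
    have : c.support.toFinset = univ.filter fun v => 0 < H.degree v := by
      ext a
      simp only [List.mem_toFinset, mem_filter, mem_univ, true_and]
      refine ⟨hcpos a, fun h => ?_⟩
      by_contra h'
      have := hcon a h'
      omega
    rw [this, ← hcardeq] at hcard
    rw [hcard] at heven
    exact (Nat.not_even_iff_odd.2 hco) heven
  obtain ⟨v, hv1, hv2⟩ := hex
  obtain ⟨y, c', hc', hco', hsup⟩ := hodd {v | v ∉ c.support}
    (fun a b hab ha hb => ha (hccl b a hab.symm hb)) ⟨v, hv1, hv2⟩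
  exact ⟨x, y, c, c', hc, hc', hco, hco', fun z hz hz' => hsup z hz' hz⟩


lemma vs_add_smul (w k : Sym2 V → ℝ) (t : ℝ) (v : V) :
    vs (fun e => w e + t * k e) v = vs w v + t * vs k v := by
  simp only [vs, Finset.mul_sum, ← Finset.sum_add_distrib]
  refine Finset.sum_congr rfl fun e _ => ?_
  split_ifs <;> simp

lemma reduce_aux (G : SimpleGraph V) (w k : Sym2 V → ℝ) (hsupp : ∀ e, w e ≠ 0 → e ∈ G.edgeSet)
    (hk0 : k ≠ 0) (hkF : ∀ e, k e ≠ 0 → Int.fract (w e) ≠ 0) (hkv : ∀ v, vs k v = 0)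
    (hsg : ∑ e, (if 0 ≤ w e then (1 : ℝ) else -1) * k e ≤ 0) :
    ∃ w' : Sym2 V → ℝ, (∀ e, w' e ≠ 0 → e ∈ G.edgeSet) ∧ (∀ v, vs w' v = vs w v) ∧
      ∑ e, |w' e| ≤ ∑ e, |w e| ∧
      (univ.filter fun e => Int.fract (w' e) ≠ 0).card <
        (univ.filter fun e => Int.fract (w e) ≠ 0).card := by
  obtain ⟨e₁, he₁⟩ := Function.ne_iff.1 hk0
  let τ : Sym2 V → ℝ := fun e =>
    if 0 < k e then (⌊w e⌋ + 1 - w e) / k e else (⌊w e⌋ - w e) / k e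
  obtain ⟨e₀, he₀, hmin⟩ := Finset.exists_min_image (univ.filter fun e => k e ≠ 0) τ
    ⟨e₁, by simpa using he₁⟩
  have he₀' : k e₀ ≠ 0 := by simpa using he₀
  have hfr : ∀ e, k e ≠ 0 → (⌊w e⌋ : ℝ) < w e ∧ w e < ⌊w e⌋ + 1 := by
    intro e he
    refine ⟨?_, Int.lt_floor_add_one _⟩
    have h1 := hkF e he
    have h2 := Int.fract_nonneg (w e)
    have h3 : 0 < Int.fract (w e) := lt_of_le_of_ne h2 (Ne.symm h1)
    have := Int.self_sub_floor (w e)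
    linarith
  set t := τ e₀ with ht
  have htpos : 0 < t := by
    obtain ⟨h1, h2⟩ := hfr e₀ he₀'
    simp only [ht, τ]
    split_ifs with h
    · exact div_pos (by linarith) h
    · exact div_pos_of_neg_of_neg (by linarith) (lt_of_le_of_ne (not_lt.1 h) he₀')
  have hrange : ∀ e, k e ≠ 0 → (⌊w e⌋ : ℝ) ≤ w e + t * k e ∧ w e + t * k e ≤ ⌊w e⌋ + 1 := by
    intro e he
    obtain ⟨h1, h2⟩ := hfr e he
    have hm : t ≤ τ e := hmin e (by simpa using he)
    simp only [τ] at hm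
    split_ifs at hm with h
    · rw [le_div_iff₀ h] at hm
      have : 0 < t * k e := mul_pos htpos h
      constructor <;> linarith
    · have hneg : k e < 0 := lt_of_le_of_ne (not_lt.1 h) he
      rw [le_div_iff_of_neg hneg] at hm
      have : t * k e < 0 := mul_neg_of_pos_of_neg htpos hneg
      constructor <;> linarith
  refine ⟨fun e => w e + t * k e, ?_, ?_, ?_, ?_⟩
  · intro e he
    by_cases hw : w e = 0
    · by_cases hk : k e = 0
      · simp [hw, hk] at he
      · exact absurd (by simp [hw]) (hkF e hk)
    · exact hsupp e hw
  · intro v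
    rw [vs_add_smul, hkv v]; ring
  · have habs : ∀ e, |w e + t * k e| = |w e| + t * ((if 0 ≤ w e then (1 : ℝ) else -1) * k e) := by
      intro e
      by_cases hk : k e = 0
      · simp [hk]
      obtain ⟨h1, h2⟩ := hrange e hk
      split_ifs with h
      · have : (0 : ℝ) ≤ ⌊w e⌋ := by exact_mod_cast Int.floor_nonneg.2 h
        rw [abs_of_nonneg h, abs_of_nonneg (by linarith)]; ring
      · have h3 : ⌊w e⌋ < 0 := Int.floor_lt.2 (by simpa using h)
        have h4 : (⌊w e⌋ : ℝ) + 1 ≤ 0 := by exact_mod_cast h3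
        rw [abs_of_neg (not_le.1 h), abs_of_nonpos (by linarith)]; ring
    simp only [habs, Finset.sum_add_distrib, ← Finset.mul_sum]
    have := mul_nonpos_of_nonneg_of_nonpos htpos.le hsg
    linarith
  · apply Finset.card_lt_card
    rw [Finset.ssubset_iff_of_subset]
    · refine ⟨e₀, by simpa using hkF e₀ he₀', ?_⟩
      simp only [mem_filter, mem_univ, true_and, not_not]
      have hval : ∃ z : ℤ, w e₀ + t * k e₀ = z := by
        simp only [ht, τ]
        split_ifs with h
        · refine ⟨⌊w e₀⌋ + 1, ?_⟩
          rw [div_mul_cancel₀ _ he₀']; push_cast; ring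
        · refine ⟨⌊w e₀⌋, ?_⟩
          rw [div_mul_cancel₀ _ he₀']; ring
      obtain ⟨z, hz⟩ := hval
      rw [hz]; simp
    · intro e
      simp only [mem_filter, mem_univ, true_and]
      intro he
      by_cases hk : k e = 0
      · simpa [hk] using he
      · exact hkF e hk

lemma reduce (G : SimpleGraph V) (w k : Sym2 V → ℝ) (hsupp : ∀ e, w e ≠ 0 → e ∈ G.edgeSet)
    (hk0 : k ≠ 0) (hkF : ∀ e, k e ≠ 0 → Int.fract (w e) ≠ 0) (hkv : ∀ v, vs k v = 0) :
    ∃ w' : Sym2 V → ℝ, (∀ e, w' e ≠ 0 → e ∈ G.edgeSet) ∧ (∀ v, vs w' v = vs w v) ∧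
      ∑ e, |w' e| ≤ ∑ e, |w e| ∧
      (univ.filter fun e => Int.fract (w' e) ≠ 0).card <
        (univ.filter fun e => Int.fract (w e) ≠ 0).card := by
  rcases le_total (∑ e, (if 0 ≤ w e then (1 : ℝ) else -1) * k e) 0 with h | h
  · exact reduce_aux G w k hsupp hk0 hkF hkv h
  · refine reduce_aux G w (fun e => - k e) hsupp ?_ ?_ ?_ ?_
    · intro h0
      apply hk0
      ext e
      have := congrFun h0 e
      simpa using this
    · intro e he
      exact hkF e (by simpa using he)
    · intro v
      have := vs_add_smul (fun _ => 0) k (-1) v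
      simp only [zero_add, neg_mul, one_mul] at this
      rw [this, hkv v]
      simp [vs]
    · simp only [mul_neg, Finset.sum_neg_distrib]
      linarith

/-- The graph has two vertex-disjoint odd cycles. -/
def TwoOdd (G : SimpleGraph V) : Prop :=
  ∃ (v w : V) (c : G.Walk v v) (c' : G.Walk w w),
      c.IsCycle ∧ c'.IsCycle ∧ Odd c.length ∧ Odd c'.length ∧
      ∀ x ∈ c.support, x ∉ c'.support

lemma integral_of_ker (G : SimpleGraph V) (w : Sym2 V → ℝ)
    (hsupp : ∀ e, w e ≠ 0 → e ∈ G.edgeSet)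
    (hIntg : ∀ v, ∃ z : ℤ, vs w v = z) (hS : ∃ z : ℤ, ∑ e, w e = z)
    (hker : ∀ k : Sym2 V → ℝ, (∀ e, k e ≠ 0 → Int.fract (w e) ≠ 0) → (∀ v, vs k v = 0) → k = 0)
    (hno : ¬ TwoOdd G) (e₀ : Sym2 V) : Int.fract (w e₀) = 0 := by
  classical
  by_contra hne
  have hE : ∀ e, Int.fract (w e) ≠ 0 → e ∈ G.edgeSet := by
    intro e he
    apply hsupp
    intro h
    simp [h] at he
  let H : SimpleGraph V := fromEdgeSet {e | Int.fract (w e) ≠ 0}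
  have hH : ∀ e, e ∈ H.edgeSet ↔ Int.fract (w e) ≠ 0 := by
    intro e
    simp only [H, edgeSet_fromEdgeSet, Set.mem_sdiff, Set.mem_ofPred_eq]
    refine ⟨fun h => h.1, fun h => ⟨h, ?_⟩⟩
    have := G.not_isDiag_of_mem_edgeSet (hE e h)
    simpa using this
  have hHG : H ≤ G := by
    intro a b hab
    exact hE _ ((hH s(a, b)).1 hab)
  have hfl : ∀ e, Int.fract (w e) = w e - ⌊w e⌋ := fun e => rfl
  induction e₀ with
  | _ a b =>
  obtain ⟨x, y, c, c', hc, hc', ho, ho', hd⟩ := core_aux H (fun e => Int.fract (w e))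
    (fun e => Int.fract_lt_one _)
    (fun e he => lt_of_le_of_ne (Int.fract_nonneg _) (Ne.symm ((hH e).1 he)))
    (fun e he => by by_contra h; exact he ((hH e).2 h))
    (fun v => by
      obtain ⟨z, hz⟩ := hIntg v
      refine ⟨z - ∑ e : Sym2 V, if v ∈ e then ⌊w e⌋ else 0, ?_⟩
      push_cast
      rw [← hz, vs, vs, ← Finset.sum_sub_distrib]
      refine Finset.sum_congr rfl fun e _ => ?_
      split_ifs
      · rw [hfl]
      · simp)
    (by
      obtain ⟨z, hz⟩ := hS
      refine ⟨z - ∑ e : Sym2 V, ⌊w e⌋, ?_⟩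
      push_cast
      rw [← hz, ← Finset.sum_sub_distrib]
      rfl)
    (fun k hk hkv => hker k (fun e he => (hH e).1 (hk e he)) hkv) a b ((hH s(a, b)).2 hne)
  refine hno ⟨x, y, c.mapLe hHG, c'.mapLe hHG, (Walk.isCycle_mapLe hHG).2 hc,
    (Walk.isCycle_mapLe hHG).2 hc', by simpa using ho, by simpa using ho', ?_⟩
  intro z
  rw [Walk.support_mapLe_eq_support, Walk.support_mapLe_eq_support]
  exact hd z

lemma exists_integral (G : SimpleGraph V) (hno : ¬ TwoOdd G) (m : ℕ) :
    ∀ (w : Sym2 V → ℝ), (univ.filter fun e => Int.fract (w e) ≠ 0).card = m →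
    (∀ e, w e ≠ 0 → e ∈ G.edgeSet) →
    (∀ v, ∃ z : ℤ, vs w v = z) → (∃ z : ℤ, ∑ e, w e = z) →
    ∃ u : Sym2 V → ℤ, (∀ e, u e ≠ 0 → e ∈ G.edgeSet) ∧ (∀ v, vs (fun e => (u e : ℝ)) v = vs w v) ∧
      ∑ e, |(u e : ℝ)| ≤ ∑ e, |w e| := by
  induction m using Nat.strong_induction_on with
  | _ m ih =>
    intro w hm hsupp hIntg hS
    by_cases hker : ∀ k : Sym2 V → ℝ, (∀ e, k e ≠ 0 → Int.fract (w e) ≠ 0) →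
        (∀ v, vs k v = 0) → k = 0
    · have h := integral_of_ker G w hsupp hIntg hS hker hno
      have hw : ∀ e, ((⌊w e⌋ : ℤ) : ℝ) = w e := by
        intro e
        have := h e
        have h2 := Int.self_sub_floor (w e)
        linarith
      refine ⟨fun e => ⌊w e⌋, ?_, ?_, ?_⟩
      · intro e he
        apply hsupp
        intro h0
        simp [h0] at he
      · intro v; simp only [hw]
      · simp only [hw]; exact le_rfl
    · push Not at hker
      obtain ⟨k, hkF, hkv, hk0⟩ := hker
      obtain ⟨w', hs', hv', ha', hc'⟩ := reduce G w k hsupp hk0 hkF hkv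
      obtain ⟨u, hu1, hu2, hu3⟩ := ih _ (hm ▸ hc') w' rfl hs' (fun v => by rw [hv' v]; exact hIntg v)
        (by
          have h1 := two_mul_sum G w hsupp
          have h2 := two_mul_sum G w' hs'
          simp only [hv'] at h2
          have : ∑ e, w' e = ∑ e, w e := by linarith
          rw [this]; exact hS)
      exact ⟨u, hu1, fun v => (hu2 v).trans (hv' v), hu3.trans ha'⟩

end core

section geometry
variable {n : ℕ}

/-- Lattice generator attached to an edge. -/
noncomputable def ev (e : Sym2 (Fin n)) : Fin (n + 1) → ℝ :=
  Fin.snoc (fun v => if v ∈ e then (1 : ℝ) else 0) (1 : ℝ)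

lemma single_add_single (i j : Fin n) (h : i ≠ j) :
    (Pi.single i 1 + Pi.single j 1 : Fin n → ℝ) = fun v => if v ∈ s(i, j) then (1 : ℝ) else 0 := by
  ext v
  simp only [Pi.add_apply, Pi.single_apply, Sym2.mem_iff]
  by_cases h1 : v = i
  · subst h1; simp [h]
  · by_cases h2 : v = j
    · subst h2; simp [h1]
    · simp [h1, h2]

lemma sum_ev_castSucc (w : Sym2 (Fin n) → ℝ) (v : Fin n) :
    (∑ e, w e • ev e) (Fin.castSucc v) = vs w v := by
  simp only [Finset.sum_apply, Pi.smul_apply, smul_eq_mul, ev, Fin.snoc_castSucc, vs]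
  refine Finset.sum_congr rfl fun e _ => ?_
  split_ifs <;> simp

lemma sum_ev_last (w : Sym2 (Fin n) → ℝ) :
    (∑ e, w e • ev e) (Fin.last n) = ∑ e, w e := by
  simp [ev]

/-- Points represented by signed edge weightings of total mass at most one. -/
def Rep (G : SimpleGraph (Fin n)) : Set (Fin (n + 1) → ℝ) :=
  {x | ∃ w : Sym2 (Fin n) → ℝ, (∀ e, w e ≠ 0 → e ∈ G.edgeSet) ∧ x = ∑ e, w e • ev e ∧
    ∑ e, |w e| ≤ 1}

lemma convex_Rep (G : SimpleGraph (Fin n)) : Convex ℝ (Rep G) := by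
  rintro x ⟨w, hw, rfl, hw1⟩ y ⟨w', hw', rfl, hw1'⟩ a b ha hb hab
  refine ⟨fun e => a * w e + b * w' e, ?_, ?_, ?_⟩
  · intro e he
    by_contra h
    have h1 : w e = 0 := by by_contra h'; exact h (hw e h')
    have h2 : w' e = 0 := by by_contra h'; exact h (hw' e h')
    simp [h1, h2] at he
  · simp only [Finset.smul_sum, ← Finset.sum_add_distrib, add_smul, mul_smul]
  · calc ∑ e, |a * w e + b * w' e| ≤ ∑ e, (a * |w e| + b * |w' e|) := by
          refine Finset.sum_le_sum fun e _ => ?_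
          refine (abs_add_le _ _).trans ?_
          rw [abs_mul, abs_mul, abs_of_nonneg ha, abs_of_nonneg hb]
      _ = a * ∑ e, |w e| + b * ∑ e, |w' e| := by
          rw [Finset.sum_add_distrib, Finset.mul_sum, Finset.mul_sum]
      _ ≤ a * 1 + b * 1 := by gcongr
      _ = 1 := by linarith

lemma snoc_comb (p q : Fin n → ℝ) (a b s t : ℝ) :
    (Fin.snoc (a • p + b • q) (a * s + b * t) : Fin (n + 1) → ℝ) =
      a • Fin.snoc p s + b • Fin.snoc q t := by
  ext i
  refine Fin.lastCases ?_ (fun j => ?_) i <;> simp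

lemma snoc_neg (p : Fin n → ℝ) (s : ℝ) :
    (Fin.snoc (-p) (-s) : Fin (n + 1) → ℝ) = - (Fin.snoc p s : Fin (n + 1) → ℝ) := by
  ext i
  refine Fin.lastCases ?_ (fun j => ?_) i <;> simp

lemma single_smul_ev (e : Sym2 (Fin n)) (s : ℝ) :
    ∑ e', (if e' = e then s else 0) • ev e' = s • ev e := by
  simp [ite_smul]

lemma ev_mem_Rep (G : SimpleGraph (Fin n)) (e : Sym2 (Fin n)) (he : e ∈ G.edgeSet) (s : ℝ)
    (hs : |s| ≤ 1) : s • ev e ∈ Rep G := by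
  refine ⟨fun e' => if e' = e then s else 0, ?_, (single_smul_ev e s).symm, ?_⟩
  · intro e' h
    by_cases h' : e' = e
    · rw [h']; exact he
    · simp [h'] at h
  · have : ∀ e', |if e' = e then s else 0| = if e' = e then |s| else 0 := by
      intro e'; split_ifs <;> simp
    simpa [this] using hs

lemma Omega_subset_Rep (G : SimpleGraph (Fin n)) :
    Omega (edgePolytope G) (edgePolytope G) ⊆ Rep G := by
  have hgen : ∀ s : ℝ, |s| ≤ 1 → ∀ p ∈ edgePolytope G, s • (Fin.snoc p 1 : Fin (n + 1) → ℝ) ∈ Rep G := by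
    intro s hs p hp
    have hc : Convex ℝ {p : Fin n → ℝ | s • (Fin.snoc p 1 : Fin (n + 1) → ℝ) ∈ Rep G} := by
      intro p hp q hq a b ha hb hab
      have := convex_Rep G hp hq ha hb hab
      have h2 := snoc_comb p q a b 1 1
      simp only [mul_one, hab] at h2
      simp only [Set.mem_ofPred_eq]
      rw [h2]
      convert this using 1
      simp only [smul_add, smul_smul, mul_comm]
    refine convexHull_min ?_ hc hp
    rintro x ⟨i, j, hij, rfl⟩
    simp only [Set.mem_ofPred_eq]
    rw [single_add_single i j (G.ne_of_adj hij)]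
    exact ev_mem_Rep G s(i, j) hij s hs
  refine convexHull_min ?_ (convex_Rep G)
  rintro x (⟨p, hp, rfl⟩ | ⟨p, hp, rfl⟩)
  · simpa using hgen 1 (by simp) p hp
  · have := hgen (-1) (by simp) p hp
    simp only [neg_smul, one_smul] at this
    simpa only [snoc_neg] using this

lemma ev_mem_Omega (G : SimpleGraph (Fin n)) (e : Sym2 (Fin n)) (he : e ∈ G.edgeSet) :
    ev e ∈ Omega (edgePolytope G) (edgePolytope G) ∧
      -ev e ∈ Omega (edgePolytope G) (edgePolytope G) := by
  have hp : (fun v => if v ∈ e then (1 : ℝ) else 0) ∈ edgePolytope G := by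
    apply subset_convexHull
    induction e with
    | _ i j => exact ⟨i, j, he, (single_add_single i j (G.ne_of_adj he)).symm⟩
  constructor
  · exact subset_convexHull _ _ (Or.inl ⟨_, hp, rfl⟩)
  · refine subset_convexHull _ _ (Or.inr ⟨_, hp, ?_⟩)
    simp only [snoc_neg]; rfl

lemma ev_lattice (e : Sym2 (Fin n)) : IsLatticePt (ev e) := by
  intro i
  refine Fin.lastCases ⟨1, by simp [ev]⟩ (fun j => ?_) i
  by_cases h : j ∈ e
  · exact ⟨1, by simp [ev, h]⟩
  · exact ⟨0, by simp [ev, h]⟩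

lemma neg_lattice {m : ℕ} {x : Fin m → ℝ} (h : IsLatticePt x) : IsLatticePt (-x) := by
  intro i
  obtain ⟨z, hz⟩ := h i
  exact ⟨-z, by simp [hz]⟩

lemma decompose (G : SimpleGraph (Fin n)) (e₀ : Sym2 (Fin n)) (he₀ : e₀ ∈ G.edgeSet) (N : ℕ) :
    ∀ u : Sym2 (Fin n) → ℤ, (∀ e, u e ≠ 0 → e ∈ G.edgeSet) → ∑ e, |u e| ≤ N →
    ∃ f : Fin N → (Fin (n + 1) → ℝ),
      (∀ k, f k ∈ Omega (edgePolytope G) (edgePolytope G) ∧ IsLatticePt (f k)) ∧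
      ∑ e, (u e : ℝ) • ev e = ∑ k, f k := by
  have h0 : (0 : Fin (n + 1) → ℝ) ∈ Omega (edgePolytope G) (edgePolytope G) := by
    obtain ⟨h1, h2⟩ := ev_mem_Omega G e₀ he₀
    have := (convex_convexHull ℝ (liftTop (edgePolytope G) ∪ liftBot (edgePolytope G)))
      h1 h2 (show (0 : ℝ) ≤ 1 / 2 by norm_num) (show (0 : ℝ) ≤ 1 / 2 by norm_num) (by norm_num)
    rw [smul_neg, add_neg_cancel] at this
    exact this
  have h0l : IsLatticePt (0 : Fin (n + 1) → ℝ) := fun i => ⟨0, by simp⟩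
  have hz : ∀ (N : ℕ) (u : Sym2 (Fin n) → ℤ), u = 0 →
      ∃ f : Fin N → (Fin (n + 1) → ℝ),
      (∀ k, f k ∈ Omega (edgePolytope G) (edgePolytope G) ∧ IsLatticePt (f k)) ∧
      ∑ e, (u e : ℝ) • ev e = ∑ k, f k := by
    rintro N u rfl
    exact ⟨fun _ => 0, fun _ => ⟨h0, h0l⟩, by simp⟩
  induction N with
  | zero =>
    intro u _ hN
    apply hz
    ext e
    have h := (Finset.sum_eq_zero_iff_of_nonneg (fun e _ => abs_nonneg (u e))).1
      (le_antisymm (by simpa using hN) (Finset.sum_nonneg fun e _ => abs_nonneg (u e)))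
      e (Finset.mem_univ e)
    simpa using h
  | succ N ih =>
    intro u hu hN
    by_cases hu0 : u = 0
    · exact hz _ u hu0
    obtain ⟨e₁, he₁⟩ := Function.ne_iff.1 hu0
    simp only [Pi.zero_apply] at he₁
    have he₁G := hu e₁ he₁
    let σ : ℤ := if 0 < u e₁ then 1 else -1
    let u' : Sym2 (Fin n) → ℤ := fun e => u e - if e = e₁ then σ else 0
    have hsum : ∑ e, |u' e| = ∑ e, |u e| - 1 := by
      have : ∀ e, |u' e| = |u e| - if e = e₁ then 1 else 0 := by
        intro e
        by_cases h : e = e₁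
        · subst h
          simp only [u', σ, if_true]
          split_ifs with h
          · rw [abs_of_pos h, abs_of_nonneg (by omega)]
          · rw [abs_of_nonpos (by omega), abs_of_nonpos (by omega)]; ring
        · simp [u', h]
      simp [this, Finset.sum_sub_distrib]
    obtain ⟨f, hf, hfs⟩ := ih u' (by
      intro e he
      by_cases h : e = e₁
      · rw [h]; exact he₁G
      · exact hu e (by simpa [u', h] using he)) (by rw [hsum]; push_cast at hN; linarith)
    have hσ : (σ : ℝ) • ev e₁ ∈ Omega (edgePolytope G) (edgePolytope G) ∧
        IsLatticePt ((σ : ℝ) • ev e₁) := by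
      simp only [σ]
      split_ifs
      · simpa using ⟨(ev_mem_Omega G e₁ he₁G).1, ev_lattice e₁⟩
      · simpa using ⟨(ev_mem_Omega G e₁ he₁G).2, neg_lattice (ev_lattice e₁)⟩
    refine ⟨Fin.cons ((σ : ℝ) • ev e₁) f, ?_, ?_⟩
    · intro k
      refine Fin.cases ?_ (fun j => ?_) k
      · simpa using hσ
      · simpa using hf j
    · rw [Fin.sum_univ_succ]
      simp only [Fin.cons_zero, Fin.cons_succ]
      rw [← hfs, ← single_smul_ev e₁ (σ : ℝ), ← Finset.sum_add_distrib]
      refine Finset.sum_congr rfl fun e _ => ?_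
      rw [← add_smul]
      congr 1
      simp only [u']
      split_ifs <;> simp

lemma backward (G : SimpleGraph (Fin n)) (a b : Fin n) (hab : G.Adj a b) (hno : ¬ TwoOdd G) :
    HasIDP (Omega (edgePolytope G) (edgePolytope G)) := by
  rintro N hN x ⟨y, hy, rfl⟩ hlat
  obtain ⟨w, hw, rfl, hw1⟩ := Omega_subset_Rep G hy
  have hx : (N : ℝ) • ∑ e, w e • ev e = ∑ e, ((N : ℝ) * w e) • ev e := by
    simp only [Finset.smul_sum, mul_smul]
  simp only [hx] at hlat ⊢
  have hNn : (0 : ℝ) ≤ N := Nat.cast_nonneg N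
  obtain ⟨u, hu1, hu2, hu3⟩ := exists_integral G hno _ (fun e => (N : ℝ) * w e) rfl
    (fun e he => hw e (right_ne_zero_of_mul he))
    (fun v => by
      obtain ⟨z, hz⟩ := hlat (Fin.castSucc v)
      exact ⟨z, by rw [← hz, sum_ev_castSucc]⟩)
    (by
      obtain ⟨z, hz⟩ := hlat (Fin.last n)
      exact ⟨z, by rw [← hz, sum_ev_last]⟩)
  obtain ⟨f, hf, hfs⟩ := decompose G s(a, b) hab N u hu1 (by
    have h1 : ∑ e, |(N : ℝ) * w e| ≤ N := by
      simp only [abs_mul, ← Finset.mul_sum, Nat.abs_cast]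
      calc (N : ℝ) * ∑ e, |w e| ≤ N * 1 := by gcongr
        _ = N := mul_one _
    have h2 := hu3.trans h1
    exact_mod_cast h2)
  refine ⟨f, hf, ?_⟩
  rw [← hfs]
  have h1 := two_mul_sum G (fun e => (u e : ℝ)) (fun e he => hu1 e (by simpa using he))
  have h2 := two_mul_sum G (fun e => (N : ℝ) * w e) (fun e he => hw e (right_ne_zero_of_mul he))
  simp only [hu2] at h1
  ext i
  refine Fin.lastCases ?_ (fun j => ?_) i
  · rw [sum_ev_last, sum_ev_last]; linarith
  · rw [sum_ev_castSucc, sum_ev_castSucc, hu2]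

/-- Elementary inequalities for the edge polytope. -/
lemma edgePolytope_bounds (G : SimpleGraph (Fin n)) (p : Fin n → ℝ) (hp : p ∈ edgePolytope G) :
    (∀ v, 0 ≤ p v) ∧ (∀ v, p v ≤ 1) ∧ ∑ v, p v = 2 := by
  have hc : Convex ℝ {p : Fin n → ℝ | (∀ v, 0 ≤ p v) ∧ (∀ v, p v ≤ 1) ∧ ∑ v, p v = 2} := by
    rintro p ⟨h1, h2, h3⟩ q ⟨h1', h2', h3'⟩ a b ha hb hab
    refine ⟨fun v => ?_, fun v => ?_, ?_⟩
    · simp only [Pi.add_apply, Pi.smul_apply, smul_eq_mul]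
      have := mul_nonneg ha (h1 v)
      have := mul_nonneg hb (h1' v)
      linarith
    · simp only [Pi.add_apply, Pi.smul_apply, smul_eq_mul]
      have := mul_le_mul_of_nonneg_left (h2 v) ha
      have := mul_le_mul_of_nonneg_left (h2' v) hb
      linarith
    · simp only [Pi.add_apply, Pi.smul_apply, smul_eq_mul, Finset.sum_add_distrib,
        ← Finset.mul_sum, h3, h3']
      linarith
  refine convexHull_min ?_ hc hp
  rintro x ⟨i, j, hij, rfl⟩
  have hne := G.ne_of_adj hij
  refine ⟨fun v => ?_, fun v => ?_, ?_⟩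
  · rw [single_add_single i j hne]
    dsimp only
    split_ifs <;> norm_num
  · rw [single_add_single i j hne]
    dsimp only
    split_ifs <;> norm_num
  · simp only [Pi.add_apply, Finset.sum_add_distrib, Finset.sum_pi_single', Finset.mem_univ,
      if_true]
    norm_num

lemma convex_edgePolytope (G : SimpleGraph (Fin n)) : Convex ℝ (edgePolytope G) :=
  convex_convexHull ℝ _

/-- Points of `Ω(P)` as explicit combinations. -/
lemma Omega_form (G : SimpleGraph (Fin n)) (p₀ : Fin n → ℝ) (hp₀ : p₀ ∈ edgePolytope G)
    (x : Fin (n + 1) → ℝ) (hx : x ∈ Omega (edgePolytope G) (edgePolytope G)) :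
    ∃ (s t : ℝ) (p q : Fin n → ℝ), 0 ≤ s ∧ 0 ≤ t ∧ s + t = 1 ∧ p ∈ edgePolytope G ∧
      q ∈ edgePolytope G ∧ (∀ v, x (Fin.castSucc v) = s * p v - t * q v) ∧
      x (Fin.last n) = s - t := by
  have hct : Convex ℝ (liftTop (edgePolytope G)) := by
    rintro _ ⟨p, hp, rfl⟩ _ ⟨q, hq, rfl⟩ a b ha hb hab
    refine ⟨a • p + b • q, convex_edgePolytope G hp hq ha hb hab, ?_⟩
    have := snoc_comb p q a b 1 1
    simp only [mul_one, hab] at this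
    exact this
  have hcb : Convex ℝ (liftBot (edgePolytope G)) := by
    rintro _ ⟨p, hp, rfl⟩ _ ⟨q, hq, rfl⟩ a b ha hb hab
    refine ⟨a • p + b • q, convex_edgePolytope G hp hq ha hb hab, ?_⟩
    have := snoc_comb p q a b 1 1
    simp only [mul_one, hab] at this
    simp only [snoc_neg]
    rw [this, smul_neg, smul_neg, neg_add]
  rw [Omega, hct.convexHull_union hcb ⟨_, p₀, hp₀, rfl⟩ ⟨_, p₀, hp₀, rfl⟩,
    mem_convexJoin] at hx
  obtain ⟨_, ⟨p, hp, rfl⟩, _, ⟨q, hq, rfl⟩, s, t, hs, ht, hst, rfl⟩ := hx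
  refine ⟨s, t, p, q, hs, ht, hst, hp, hq, fun v => ?_, ?_⟩
  · simp; ring
  · simp; ring

lemma lattice_key (G : SimpleGraph (Fin n)) (p₀ : Fin n → ℝ) (hp₀ : p₀ ∈ edgePolytope G)
    (S T : Finset (Fin n)) (hST : Disjoint S T)
    (x : Fin (n + 1) → ℝ) (hx : x ∈ Omega (edgePolytope G) (edgePolytope G))
    (hlat : IsLatticePt x) :
    ∑ v ∈ S, x (Fin.castSucc v) - ∑ v ∈ T, x (Fin.castSucc v) ≤ 2 ∧
    (∑ v ∈ S, x (Fin.castSucc v) - ∑ v ∈ T, x (Fin.castSucc v) = 2 →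
      ∃ z : ℤ, ∑ v ∈ S, x (Fin.castSucc v) = 2 * z) := by
  obtain ⟨s, t, p, q, hs, ht, hst, hp, hq, hxv, hxl⟩ := Omega_form G p₀ hp₀ x hx
  have hbd : ∀ p ∈ edgePolytope G, 0 ≤ ∑ v ∈ S, p v ∧ 0 ≤ ∑ v ∈ T, p v ∧
      ∑ v ∈ S, p v + ∑ v ∈ T, p v ≤ 2 := by
    intro p hp
    obtain ⟨h1, h2, h3⟩ := edgePolytope_bounds G p hp
    refine ⟨Finset.sum_nonneg fun v _ => h1 v, Finset.sum_nonneg fun v _ => h1 v, ?_⟩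
    rw [← Finset.sum_union hST, ← h3]
    exact Finset.sum_le_sum_of_subset_of_nonneg (Finset.subset_univ _) fun v _ _ => h1 v
  have hsum : ∀ U : Finset (Fin n), ∑ v ∈ U, x (Fin.castSucc v)
      = s * ∑ v ∈ U, p v - t * ∑ v ∈ U, q v := by
    intro U
    simp only [hxv, Finset.sum_sub_distrib, Finset.mul_sum]
  obtain ⟨hp1, hp2, hp3⟩ := hbd p hp
  obtain ⟨hq1, hq2, hq3⟩ := hbd q hq
  constructor
  · rw [hsum S, hsum T]
    have h1 : s * (∑ v ∈ S, p v - ∑ v ∈ T, p v) ≤ s * 2 :=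
      mul_le_mul_of_nonneg_left (by linarith) hs
    have h2 : t * (∑ v ∈ T, q v - ∑ v ∈ S, q v) ≤ t * 2 :=
      mul_le_mul_of_nonneg_left (by linarith) ht
    linarith
  · intro hψ
    obtain ⟨z, hz⟩ := hlat (Fin.last n)
    rw [hxl] at hz
    have hz1 : (z : ℝ) ≤ 1 := by linarith
    have hz2 : (-1 : ℝ) ≤ z := by linarith
    have hz1' : z ≤ 1 := by exact_mod_cast hz1
    have hz2' : -1 ≤ z := by exact_mod_cast hz2
    have hcases : z = 1 ∨ z = 0 ∨ z = -1 := by omega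
    rcases hcases with rfl | rfl | rfl
    · push_cast at hz
      have hs1 : s = 1 := by linarith
      have ht0 : t = 0 := by linarith
      rw [hsum S, hsum T] at hψ
      rw [hsum S]
      subst hs1 ht0
      exact ⟨1, by push_cast; linarith⟩
    · push_cast at hz
      have hs1 : s = 1 / 2 := by linarith
      have ht0 : t = 1 / 2 := by linarith
      subst hs1 ht0
      have hx0 : ∀ v, x (Fin.castSucc v) = 0 := by
        intro v
        obtain ⟨y, hy⟩ := hlat (Fin.castSucc v)
        have h1 := (edgePolytope_bounds G p hp).1 v
        have h2 := (edgePolytope_bounds G p hp).2.1 v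
        have h3 := (edgePolytope_bounds G q hq).1 v
        have h4 := (edgePolytope_bounds G q hq).2.1 v
        have h5 := hxv v
        rw [hy] at h5
        have h6 : (y : ℝ) < 1 := by linarith
        have h7 : (-1 : ℝ) < y := by linarith
        have h6' : y < 1 := by exact_mod_cast h6
        have h7' : -1 < y := by exact_mod_cast h7
        have : y = 0 := by omega
        rw [hy, this]; simp
      simp [hx0] at hψ
    · push_cast at hz
      have hs1 : s = 0 := by linarith
      have ht0 : t = 1 := by linarith
      rw [hsum S, hsum T] at hψ
      rw [hsum S]
      subst hs1 ht0
      exact ⟨0, by push_cast; linarith⟩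

lemma closed_walk_sum {G : SimpleGraph (Fin n)} {a : Fin n} (c : G.Walk a a) (g : Fin n → ℝ) :
    (c.darts.map fun d => g d.fst + g d.snd).sum = 2 * (c.support.tail.map g).sum := by
  have h1 := congrArg (fun l => (l.map g).sum) c.cons_map_snd_darts
  have h2 := congrArg (fun l => (l.map g).sum) c.map_fst_darts_append
  have h5 := congrArg (fun l => (l.map g).sum) c.map_snd_darts
  simp only [List.map_cons, List.sum_cons, List.map_append, List.sum_append, List.map_map,
    List.map_nil, List.sum_nil] at h1 h2 h5
  have h3 : (c.darts.map fun d => g d.fst) = List.map (g ∘ fun x => x.fst) c.darts := rfl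
  have h4 : (c.darts.map fun d => g d.snd) = List.map (g ∘ fun x => x.snd) c.darts := rfl
  rw [List.sum_map_add, h3, h4, ← h5]
  linarith

lemma ev_dart {G : SimpleGraph (Fin n)} (d : G.Dart) (v : Fin n) :
    ev d.edge (Fin.castSucc v) = (if d.fst = v then (1 : ℝ) else 0) + if d.snd = v then 1 else 0 := by
  have hne : d.fst ≠ d.snd := G.ne_of_adj d.adj
  have he : d.edge = s(d.fst, d.snd) := rfl
  have := congrFun (single_add_single d.fst d.snd hne) v
  simp only [ev, Fin.snoc_castSucc, he]
  rw [← this]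
  simp only [Pi.add_apply, Pi.single_apply, eq_comm]

/-- Multiplicity of a vertex in a list. -/
noncomputable def mult (l : List (Fin n)) (v : Fin n) : ℝ :=
  (l.map fun u => if u = v then (1 : ℝ) else 0).sum

lemma mult_int (l : List (Fin n)) (v : Fin n) : ∃ z : ℤ, mult l v = z := by
  induction l with
  | nil => exact ⟨0, by simp [mult]⟩
  | cons u l ih =>
    obtain ⟨z, hz⟩ := ih
    refine ⟨(if u = v then 1 else 0) + z, ?_⟩
    rw [Int.cast_add, ← hz]
    simp [mult]

lemma sum_mult_all (l : List (Fin n)) (S : Finset (Fin n)) (h : ∀ u ∈ l, u ∈ S) :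
    ∑ v ∈ S, mult l v = l.length := by
  induction l with
  | nil => simp [mult]
  | cons u l ih =>
    have ih' := ih fun w hw => h w (List.mem_cons_of_mem _ hw)
    have hu : u ∈ S := h u List.mem_cons_self
    have : ∀ v, mult (u :: l) v = (if u = v then (1 : ℝ) else 0) + mult l v := by
      intro v; simp [mult]
    simp only [this, Finset.sum_add_distrib, ih']
    simp [hu]; ring

lemma sum_mult_none (l : List (Fin n)) (S : Finset (Fin n)) (h : ∀ u ∈ l, u ∉ S) :
    ∑ v ∈ S, mult l v = 0 := by
  refine Finset.sum_eq_zero fun v hv => ?_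
  rw [mult]
  apply List.sum_eq_zero
  intro x hx
  rw [List.mem_map] at hx
  obtain ⟨u, hu, rfl⟩ := hx
  rw [if_neg]
  rintro rfl
  exact h u hu hv

lemma list_average {E : Type*} [AddCommGroup E] [Module ℝ E] (K : Set E) (hK : Convex ℝ K)
    (L : List E) (hL : ∀ x ∈ L, x ∈ K) (hpos : 0 < L.length) :
    (1 / (L.length : ℝ)) • L.sum ∈ K := by
  have hl : (L.length : ℝ) ≠ 0 := by positivity
  have := hK.sum_mem (t := Finset.univ) (w := fun _ : Fin L.length => 1 / (L.length : ℝ))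
    (z := fun i => L[i]) (fun _ _ => by positivity)
    (by simp [hl]) (fun i _ => hL _ (List.getElem_mem _))
  rw [← Finset.smul_sum] at this
  have h2 : ∑ i : Fin L.length, L[i] = L.sum := Fin.sum_univ_getElem L
  rwa [h2] at this

lemma forward (G : SimpleGraph (Fin n)) (hI : HasIDP (Omega (edgePolytope G) (edgePolytope G)))
    (a b : Fin n) (c : G.Walk a a) (c' : G.Walk b b) (ho : Odd c.length) (ho' : Odd c'.length)
    (hd : ∀ x ∈ c.support, x ∉ c'.support) : False := by
  classical
  obtain ⟨l, hl⟩ := ho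
  obtain ⟨l', hl'⟩ := ho'
  obtain ⟨p₀, hp₀⟩ : ∃ p₀, p₀ ∈ edgePolytope G := by
    cases c with
    | nil => simp at hl
    | @cons _ y _ h q => exact ⟨_, subset_convexHull _ _ ⟨_, _, h, rfl⟩⟩
  let L : List (Fin (n + 1) → ℝ) :=
    (c.darts.map fun d => ev d.edge) ++ (c'.darts.map fun d => -ev d.edge)
  let N : ℕ := l + l' + 1
  have hLlen : L.length = 2 * N := by
    simp only [L, N, List.length_append, List.length_map, Walk.length_darts]
    omega
  have hLK : ∀ x ∈ L, x ∈ Omega (edgePolytope G) (edgePolytope G) := by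
    intro x hx
    simp only [L, List.mem_append, List.mem_map] at hx
    rcases hx with ⟨d, -, rfl⟩ | ⟨d, -, rfl⟩
    · exact (ev_mem_Omega G d.edge d.edge_mem).1
    · exact (ev_mem_Omega G d.edge d.edge_mem).2
  have hy := list_average _ (convex_convexHull ℝ _) L hLK (by omega)
  set x : Fin (n + 1) → ℝ := (1 / 2 : ℝ) • L.sum with hxdef
  have hNpos : (N : ℝ) ≠ 0 := by simp only [N]; positivity
  have hxN : (N : ℝ) • ((1 / (L.length : ℝ)) • L.sum) = x := by
    rw [hxdef, smul_smul, hLlen]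
    congr 1
    push_cast
    field_simp
  have hLi : ∀ i, L.sum i = (c.darts.map fun d => ev d.edge i).sum
      - (c'.darts.map fun d => ev d.edge i).sum := by
    intro i
    have h1 : L.sum i = (L.map fun y => y i).sum :=
      map_list_sum (Pi.evalAddMonoidHom (fun _ : Fin (n + 1) => ℝ) i) L
    rw [h1]
    simp only [L, List.map_append, List.map_map, List.sum_append]
    have h2 : ∀ l : List G.Dart, (List.map ((fun y : Fin (n + 1) → ℝ => y i) ∘ fun d : G.Dart => -ev d.edge) l).sum
        = - (l.map fun d => ev d.edge i).sum := by
      intro l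
      induction l with
      | nil => simp
      | cons d l ih =>
        simp only [List.map_cons, List.sum_cons, ih, Function.comp_apply, Pi.neg_apply]
        ring
    rw [h2, sub_eq_add_neg]
    rfl
  have hxv : ∀ v, x (Fin.castSucc v) = mult c.support.tail v - mult c'.support.tail v := by
    intro v
    simp only [hxdef, Pi.smul_apply, smul_eq_mul, hLi, ev_dart]
    rw [closed_walk_sum c (fun u => if u = v then (1 : ℝ) else 0),
      closed_walk_sum c' (fun u => if u = v then (1 : ℝ) else 0)]
    simp only [mult]
    ring
  have hxl : x (Fin.last n) = (l : ℝ) - l' := by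
    simp only [hxdef, Pi.smul_apply, smul_eq_mul, hLi]
    simp only [ev, Fin.snoc_last, List.map_const', List.sum_replicate, Walk.length_darts, hl, hl',
      nsmul_eq_mul]
    push_cast
    ring
  have hxlat : IsLatticePt x := by
    intro i
    refine Fin.lastCases ⟨l - l', by rw [hxl]; push_cast; ring⟩ (fun v => ?_) i
    obtain ⟨z, hz⟩ := mult_int c.support.tail v
    obtain ⟨z', hz'⟩ := mult_int c'.support.tail v
    exact ⟨z - z', by rw [hxv, hz, hz']; push_cast; ring⟩
  obtain ⟨f, hf, hfs⟩ := hI N (by simp only [N]; omega) x ⟨_, hy, hxN⟩ hxlat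
  let S := c.support.toFinset
  let T := c'.support.toFinset
  have hST : Disjoint S T := by
    rw [Finset.disjoint_left]
    intro u hu hu'
    exact hd u (by simpa [S] using hu) (by simpa [T] using hu')
  have hxS : ∑ v ∈ S, x (Fin.castSucc v) = 2 * l + 1 := by
    simp only [hxv, Finset.sum_sub_distrib]
    rw [sum_mult_all _ S (fun u hu => by simpa [S] using List.mem_of_mem_tail hu),
      sum_mult_none _ S (fun u hu hu' => hd u (by simpa [S] using hu') (List.mem_of_mem_tail hu))]
    simp [hl]
  have hxT : ∑ v ∈ T, x (Fin.castSucc v) = -(2 * l' + 1) := by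
    simp only [hxv, Finset.sum_sub_distrib]
    rw [sum_mult_all c'.support.tail T (fun u hu => by simpa [T] using List.mem_of_mem_tail hu),
      sum_mult_none c.support.tail T (fun u hu hu' => hd u (List.mem_of_mem_tail hu) (by simpa [T] using hu'))]
    simp [hl']
  have hfU : ∀ U : Finset (Fin n), ∑ v ∈ U, x (Fin.castSucc v)
      = ∑ k, ∑ v ∈ U, f k (Fin.castSucc v) := by
    intro U
    rw [hfs, Finset.sum_comm]
    simp only [Finset.sum_apply]
  have hkey := fun k => lattice_key G p₀ hp₀ S T hST (f k) (hf k).1 (hf k).2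
  have htot : ∑ k, (∑ v ∈ S, f k (Fin.castSucc v) - ∑ v ∈ T, f k (Fin.castSucc v))
      = ∑ _k : Fin N, (2 : ℝ) := by
    rw [Finset.sum_sub_distrib, ← hfU S, ← hfU T, hxS, hxT]
    simp [N]
    ring
  rw [Finset.sum_eq_sum_iff_of_le (fun k _ => (hkey k).1)] at htot
  choose z hz using fun k => (hkey k).2 (htot k (Finset.mem_univ k))
  have hfin := hfU S
  simp only [hz, ← Finset.mul_sum] at hfin
  rw [hxS] at hfin
  have : (2 * (l : ℤ) + 1) = 2 * ∑ k, z k := by exact_mod_cast hfin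
  omega

end geometry
end OmegaIDP

theorem stmt11 (n : ℕ) (G : SimpleGraph (Fin n))
    (hiso : ∀ v : Fin n, ∃ w, G.Adj v w) (hconn : G.Connected) :
    HasIDP (Omega (edgePolytope G) (edgePolytope G)) ↔
      ¬ ∃ (v w : Fin n) (c : G.Walk v v) (c' : G.Walk w w),
          c.IsCycle ∧ c'.IsCycle ∧ Odd c.length ∧ Odd c'.length ∧
          ∀ x ∈ c.support, x ∉ c'.support := by
  constructor
  · intro h
    rintro ⟨v, w, c, c', -, -, ho, ho', hd⟩
    exact OmegaIDP.forward G h v w c c' ho ho' hd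
  · intro hno
    have := hconn.nonempty
    obtain ⟨w, hw⟩ := hiso (Classical.arbitrary (Fin n))
    exact OmegaIDP.backward G _ w hw hno
end

section
/- Let G be a connected non-bipartite finite simple graph on the vertex set [n] = {1,…,n}. Then the full-dimensional polytope Ω(Q_G) = conv((Q_G × {1}) ∪ ((−Q_G) × {−1})) ⊂ ℝ^n has the integer decomposition property (is normal) if and only if G does not contain two vertex-disjoint odd cycles. -/
/-- For a graph `G` on the vertex set `Fin (n+1)`, the polytope `Q_G ⊆ ℝ^n`:
the convex hull of the vectors `e_i + e_j` (for edges `{i,j}` of `G`) with the first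
coordinate deleted. -/
def fullEdgePolytope {n : ℕ} (G : SimpleGraph (Fin (n + 1))) : Set (Fin n → ℝ) :=
  convexHull ℝ {x | ∃ i j : Fin (n + 1), G.Adj i j ∧
    x = fun k : Fin n =>
      ((Pi.single i 1 + Pi.single j 1 : Fin (n + 1) → ℝ)) k.succ}

section OmegaAuxSection

open SimpleGraph

namespace OmegaAux

theorem exists_odd_cycle {V : Type*} (H : SimpleGraph V) (h : ¬ H.Colorable 2) :
    ∃ (v : V) (c : H.Walk v v), c.IsCycle ∧ Odd c.length := by
  classical
  rw [two_colorable_iff_forall_loop_even] at h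
  push Not at h
  have hex : ∃ n, ∃ (u : V) (w : H.Walk u u), Odd n ∧ w.length = n := by
    obtain ⟨u, w, hw⟩ := h
    exact ⟨w.length, u, w, by simpa using hw, rfl⟩
  obtain ⟨u, w, hodd, hlen⟩ := Nat.find_spec hex
  have hmin : ∀ (x : V) (c : H.Walk x x), Odd c.length → w.length ≤ c.length := by
    intro x c hc
    rw [hlen]
    exact Nat.find_min' hex ⟨x, c, hc, rfl⟩
  rw [← hlen] at hodd
  clear hlen
  have key : ∀ i j, i < j → j ≤ w.length → j - i < w.length → w.getVert i ≠ w.getVert j := by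
    intro i j hij hj hlt heq
    let c1 : H.Walk u u := ((w.take i).copy rfl heq).append (w.drop j)
    let c2 : H.Walk (w.getVert i) (w.getVert i) :=
      ((w.drop i).take (j - i)).copy rfl (by rw [Walk.drop_getVert, heq]; congr 1; omega)
    have h1 : c1.length = i + (w.length - j) := by
      simp [c1, Walk.take_length, Walk.drop_length]; omega
    have h2 : c2.length = j - i := by
      simp [c2, Walk.take_length, Walk.drop_length]; omega
    have m1 := hmin _ c1
    have m2 := hmin _ c2
    rw [h1] at m1
    rw [h2] at m2
    grind
  cases w with
  | nil => simp at hodd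
  | @cons _ b _ hadj p =>
    have hinj : ∀ i j, i < j → j ≤ p.length → p.getVert i ≠ p.getVert j := by
      intro i j hij hj
      have := key (i+1) (j+1) (by omega) (by simp; omega) (by simp; omega)
      simpa using this
    have hp : p.IsPath := by
      rw [← Walk.IsPath.getVert_injOn_iff]
      intro i hi j hj hij
      simp at hi hj
      rcases lt_trichotomy i j with h | h | h
      · exact absurd hij (hinj _ _ h hj)
      · exact h
      · exact absurd hij.symm (hinj _ _ h hi)
    refine ⟨u, _, (Walk.cons_isCycle_iff _ _).2 ⟨hp, ?_⟩, hodd⟩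
    intro hmem
    have := hp.length_eq_one_of_mem_edges (by rwa [Sym2.eq_swap])
    rw [Walk.length_cons, this] at hodd
    exact absurd hodd (by decide)

theorem card_le_of_indep {E V : Type*} [Fintype E] (A : V → E → ℝ) (F : Finset E) (W : Finset V)
    (h : ∀ μ : E → ℝ, (∀ e, e ∉ F → μ e = 0) → (∀ v ∈ W, ∑ e, A v e * μ e = 0) → μ = 0) :
    F.card ≤ W.card := by
  classical
  let f : (F → ℝ) →ₗ[ℝ] (W → ℝ) := Matrix.mulVecLin (Matrix.of fun (v : W) (e : F) => A v e)
  have hf : Function.Injective f := by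
    rw [← LinearMap.ker_eq_bot, LinearMap.ker_eq_bot']
    intro m hm
    have h0 := h (fun e => if he : e ∈ F then m ⟨e, he⟩ else 0) (by intro e he; simp [he]) ?_
    · ext e
      have := congrFun h0 e
      simpa using this
    · intro v hv
      have := congrFun hm ⟨v, hv⟩
      simp only [f, Matrix.mulVecLin_apply, Matrix.mulVec, dotProduct, Matrix.of_apply,
        Pi.zero_apply] at this
      refine Eq.trans ?_ this
      rw [← Finset.sum_subset (Finset.subset_univ F), ← Finset.sum_coe_sort F]
      · apply Finset.sum_congr rfl
        intro e _
        simp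
      · intro e _ he
        simp [he]
  have := LinearMap.finrank_le_finrank_of_injective hf
  simpa using this

theorem perturb_one (a b t : ℝ) (ht : 0 ≤ t) (hab : b ≠ 0 → ∀ z : ℤ, a ≠ z)
    (h1 : 0 < b → t * b ≤ ⌈a⌉ - a) (h2 : b < 0 → t * (-b) ≤ a - ⌊a⌋) :
    |a + t * b| = |a| + t * (SignType.sign a * b) := by
  rcases lt_trichotomy a 0 with ha | ha | ha
  · have : a + t * b ≤ 0 := by
      rcases lt_or_ge 0 b with hb | hb
      · have := h1 hb
        have h3 : (⌈a⌉ : ℝ) ≤ 0 := by exact_mod_cast Int.ceil_le.2 (by simpa using ha.le)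
        linarith
      · nlinarith
    rw [abs_of_nonpos this, abs_of_neg ha]; simp [ha]; ring
  · have : b = 0 := by
      by_contra hb
      exact hab hb 0 (by simpa using ha)
    simp [this]
  · have : 0 ≤ a + t * b := by
      rcases lt_or_ge b 0 with hb | hb
      · have := h2 hb
        have h3 : (0:ℝ) ≤ ⌊a⌋ := by exact_mod_cast Int.floor_nonneg.2 ha.le
        linarith
      · nlinarith
    rw [abs_of_nonneg this, abs_of_pos ha]; simp [ha]

theorem perturb_aux {E : Type*} [Fintype E] (l m : E → ℝ) (hm : m ≠ 0)
    (h : ∀ e, m e ≠ 0 → ∀ z : ℤ, l e ≠ z) (hs : ∑ e, (SignType.sign (l e) : ℝ) * m e ≤ 0) :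
    ∃ t : ℝ, ∑ e, |l e + t * m e| ≤ ∑ e, |l e| ∧
      ∃ e, m e ≠ 0 ∧ ∃ z : ℤ, l e + t * m e = z := by
  classical
  let T : E → ℝ := fun e => if 0 < m e then (⌈l e⌉ - l e) / m e else (l e - ⌊l e⌋) / (- m e)
  obtain ⟨e1, he1⟩ : ∃ e, m e ≠ 0 := by
    by_contra hh
    push Not at hh
    exact hm (funext hh)
  obtain ⟨e0, he0, hmin⟩ := Finset.exists_min_image (Finset.univ.filter fun e => m e ≠ 0) T
    ⟨e1, by simpa using he1⟩
  simp at he0 hmin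
  have hT0 : 0 ≤ T e0 := by
    dsimp only [T]
    split_ifs with hp
    · exact div_nonneg (sub_nonneg.2 (Int.le_ceil _)) hp.le
    · exact div_nonneg (sub_nonneg.2 (Int.floor_le _)) (by linarith)
  refine ⟨T e0, ?_, e0, he0, ?_⟩
  · have : ∀ e, |l e + T e0 * m e| = |l e| + T e0 * (SignType.sign (l e) * m e) := by
      intro e
      apply perturb_one _ _ _ hT0 (h e)
      · intro hp
        have := hmin e hp.ne'
        rw [show T e = (⌈l e⌉ - l e) / m e from if_pos hp, le_div_iff₀ hp] at this
        exact this
      · intro hp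
        have := hmin e hp.ne
        rw [show T e = (l e - ⌊l e⌋) / (- m e) from if_neg (by linarith),
          le_div_iff₀ (by linarith)] at this
        exact this
    simp only [this, Finset.sum_add_distrib, ← Finset.mul_sum]
    nlinarith
  · dsimp only [T]
    split_ifs with hp
    · exact ⟨⌈l e0⌉, by field_simp; ring⟩
    · exact ⟨⌊l e0⌋, by field_simp; ring⟩

theorem perturb {E : Type*} [Fintype E] (l m : E → ℝ) (hm : m ≠ 0)
    (h : ∀ e, m e ≠ 0 → ∀ z : ℤ, l e ≠ z) :
    ∃ t : ℝ, ∑ e, |l e + t * m e| ≤ ∑ e, |l e| ∧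
      ∃ e, m e ≠ 0 ∧ ∃ z : ℤ, l e + t * m e = z := by
  rcases le_total (∑ e, (SignType.sign (l e) : ℝ) * m e) 0 with hs | hs
  · exact perturb_aux l m hm h hs
  · obtain ⟨t, h1, e, h2, h3⟩ := perturb_aux l (-m) (by simpa using hm) (by simpa using h)
      (by simpa using hs)
    refine ⟨-t, by simpa using h1, e, by simpa using h2, by simpa using h3⟩

/-- incidence coefficient -/
noncomputable def inc {V : Type*} [DecidableEq V] (v : V) (e : Sym2 V) : ℝ := if v ∈ e then 1 else 0

theorem double_count {V : Type*} [DecidableEq V] (F : Finset (Sym2 V)) (W : Finset V)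
    (hd : ∀ e ∈ F, ¬ e.IsDiag) (hW : ∀ e ∈ F, ∀ v ∈ e, v ∈ W) :
    ∑ v ∈ W, (F.filter (fun e => v ∈ e)).card = 2 * F.card := by
  have := Finset.sum_card_bipartiteAbove_eq_sum_card_bipartiteBelow (s := W) (t := F)
    (fun (v : V) (e : Sym2 V) => v ∈ e)
  unfold Finset.bipartiteAbove Finset.bipartiteBelow at this
  rw [this]
  have h2 : ∀ e ∈ F, (W.filter (fun v => v ∈ e)).card = 2 := by
    intro e he
    rw [← Sym2.card_toFinset_of_not_isDiag e (hd e he)]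
    congr 1
    ext v
    simp
    exact fun h => hW e he v h
  rw [Finset.sum_congr rfl h2]
  simp [mul_comm]

theorem sum_mul_inc {V : Type*} [Fintype V] [DecidableEq V] (s : V → ℝ) (a b : V) (hab : a ≠ b) :
    ∑ v, s v * inc v s(a, b) = s a + s b := by
  have : ∀ v, s v * inc v s(a, b) = (if v = a then s v else 0) + (if v = b then s v else 0) := by
    intro v
    unfold inc
    by_cases h1 : v = a
    · subst h1; simp [hab]
    · by_cases h2 : v = b
      · subst h2; simp [h1]
      · simp [h1, h2]
  simp [this, Finset.sum_add_distrib]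

theorem odd_in {V : Type*} [Fintype V] [DecidableEq V] (F : Finset (Sym2 V)) (W : Finset V)
    (hd : ∀ e ∈ F, ¬ e.IsDiag)
    (hind : ∀ μ : Sym2 V → ℝ, (∀ e, e ∉ F → μ e = 0) → (∀ v, ∑ e, inc v e * μ e = 0) → μ = 0)
    (hne : W.Nonempty) (hdeg : ∀ v ∈ W, (F.filter (fun e => v ∈ e)).card = 2)
    (hcl : ∀ e ∈ F, ∀ v ∈ e, v ∈ W → ∀ w ∈ e, w ∈ W) :
    ∃ (v : V) (c : (fromEdgeSet (F : Set (Sym2 V))).Walk v v), c.IsCycle ∧ Odd c.length ∧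
      ∀ x ∈ c.support, x ∈ W := by
  classical
  set F' := F.filter (fun e => ∀ v ∈ e, v ∈ W) with hF'
  have hsub : F' ⊆ F := Finset.filter_subset _ _
  have hle : fromEdgeSet (F' : Set (Sym2 V)) ≤ fromEdgeSet (F : Set (Sym2 V)) :=
    fromEdgeSet_mono (by exact_mod_cast hsub)
  have hcard : F'.card = W.card := by
    have h1 := double_count F' W (fun e he => hd e (hsub he))
      (fun e he => (Finset.mem_filter.1 he).2)
    have h2 : ∀ v ∈ W, (F'.filter (fun e => v ∈ e)).card = 2 := by
      intro v hv
      rw [← hdeg v hv]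
      congr 1
      ext e
      simp only [hF', Finset.mem_filter]
      constructor
      · tauto
      · rintro ⟨h1, h2⟩
        exact ⟨⟨h1, hcl e h1 v h2 hv⟩, h2⟩
    rw [Finset.sum_congr rfl h2] at h1
    simp at h1
    omega
  have hnc : ¬ (fromEdgeSet (F' : Set (Sym2 V))).Colorable 2 := by
    rintro ⟨C⟩
    obtain ⟨w0, hw0⟩ := hne
    let s : V → ℝ := fun v => if C v = 0 then 1 else -1
    have hs : ∀ v, s v ≠ 0 := by intro v; dsimp [s]; split_ifs <;> norm_num
    have horth : ∀ e ∈ F', ∑ v, s v * inc v e = 0 := by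
      intro e he
      induction e with | _ a b
      have hab : a ≠ b := by simpa using hd _ (hsub he)
      rw [sum_mul_inc _ _ _ hab]
      have := C.valid (v := a) (w := b) (by simp [he, hab])
      dsimp [s]
      generalize C a = x at *
      generalize C b = y at *
      fin_cases x <;> fin_cases y <;> simp at *
    have h3 := card_le_of_indep (fun (v : V) (e : Sym2 V) => inc v e) F' (W.erase w0) ?_
    · rw [hcard, Finset.card_erase_of_mem hw0] at h3
      have := Finset.card_pos.2 ⟨w0, hw0⟩
      omega
    · intro μ h1 h2
      apply hind μ (fun e he => h1 e (fun h => he (hsub h)))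
      have h4 : ∀ v, v ≠ w0 → ∑ e, inc v e * μ e = 0 := by
        intro v hv
        by_cases hvW : v ∈ W
        · exact h2 v (by simp [hv, hvW])
        · apply Finset.sum_eq_zero
          intro e _
          by_cases he : e ∈ F'
          · have : v ∉ e := fun h => hvW ((Finset.mem_filter.1 he).2 v h)
            simp [inc, this]
          · simp [h1 e he]
      have h5 : ∑ v, s v * ∑ e, inc v e * μ e = 0 := by
        simp only [Finset.mul_sum]
        rw [Finset.sum_comm]
        apply Finset.sum_eq_zero
        intro e _
        by_cases he : e ∈ F'
        · have := horth e he
          simp only [← mul_assoc, ← Finset.sum_mul, this, zero_mul]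
        · simp [h1 e he]
      intro v
      by_cases hv : v = w0
      · subst hv
        rw [Finset.sum_eq_single v (fun b _ hb => by rw [h4 b hb, mul_zero]) (by simp)] at h5
        exact (mul_eq_zero.1 h5).resolve_left (hs v)
      · exact h4 v hv
  obtain ⟨v, c, hc, hodd⟩ := exists_odd_cycle _ hnc
  refine ⟨v, c.mapLe hle, hc.mapLe hle, by simpa using hodd, ?_⟩
  intro x hx
  rw [Walk.support_mapLe_eq_support] at hx
  obtain ⟨e, he, hxe⟩ := (Walk.mem_support_iff_exists_mem_edges_of_not_nil hc.not_nil).1 hx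
  have := c.edges_subset_edgeSet he
  rw [edgeSet_fromEdgeSet] at this
  have h6 : e ∈ F' := by exact_mod_cast this.1
  exact (Finset.mem_filter.1 h6).2 x hxe

/-- the subgroup of integers in the reals -/
def ZZ : AddSubgroup ℝ := (Int.castAddHom ℝ).range

theorem mem_ZZ {x : ℝ} : x ∈ ZZ ↔ ∃ z : ℤ, x = z := by
  constructor
  · rintro ⟨z, hz⟩
    exact ⟨z, hz.symm⟩
  · rintro ⟨z, hz⟩
    exact ⟨z, hz.symm⟩

theorem cycle_support_toFinset {V : Type*} [DecidableEq V] {H : SimpleGraph V} {v : V}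
    (c : H.Walk v v) (hc : c.IsCycle) : c.support.toFinset = c.support.tail.toFinset := by
  have : v ∈ c.support.tail := Walk.end_mem_tail_support hc.not_nil
  conv_lhs => rw [← Walk.cons_tail_support]
  rw [List.toFinset_cons]
  exact Finset.insert_eq_self.2 (List.mem_toFinset.2 this)

theorem core {V : Type*} [Fintype V] [DecidableEq V] (G : SimpleGraph V)
    (hno : ¬ ∃ (v w : V) (c : G.Walk v v) (c' : G.Walk w w),
          c.IsCycle ∧ c'.IsCycle ∧ Odd c.length ∧ Odd c'.length ∧
          ∀ x ∈ c.support, x ∉ c'.support)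
    (l : Sym2 V → ℝ) (F : Finset (Sym2 V)) (hF : ∀ e, e ∈ F ↔ l e ∉ ZZ)
    (hsupp : ∀ e, e ∉ G.edgeSet → l e = 0)
    (hvtx : ∀ v, ∑ e, inc v e * l e ∈ ZZ) (hsum : ∑ e, l e ∈ ZZ)
    (hind : ∀ μ : Sym2 V → ℝ, (∀ e, e ∉ F → μ e = 0) → (∀ v, ∑ e, inc v e * μ e = 0) → μ = 0) :
    F = ∅ := by
  classical
  by_contra hne
  have hFG : ∀ e ∈ F, e ∈ G.edgeSet := by
    intro e he
    by_contra h
    exact (hF e).1 he (by rw [hsupp e h]; exact ZZ.zero_mem)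
  have hd : ∀ e ∈ F, ¬ e.IsDiag := fun e he => G.not_isDiag_of_mem_edgeSet (hFG e he)
  have hHG : fromEdgeSet (F : Set (Sym2 V)) ≤ G := by
    intro a b hab
    exact hFG _ (by simpa using ((fromEdgeSet_adj _).1 hab).1)
  -- restricted integrality
  have hres : ∀ k : Sym2 V → ℝ, (∀ e ∉ F, k e ∈ ZZ) → ∑ e, k e ∈ ZZ → ∑ e ∈ F, k e ∈ ZZ := by
    intro k h1 h2
    rw [← Finset.sum_add_sum_compl F] at h2
    have h3 : ∑ e ∈ Fᶜ, k e ∈ ZZ := ZZ.sum_mem (fun e he => h1 e (by simpa using he))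
    simpa using ZZ.sub_mem h2 h3
  have hnF : ∀ e ∉ F, l e ∈ ZZ := by
    intro e he
    by_contra h
    exact he ((hF e).2 h)
  have hsumF : ∑ e ∈ F, l e ∈ ZZ := hres _ hnF hsum
  have hvtxF : ∀ v, ∑ e ∈ F.filter (fun e => v ∈ e), l e ∈ ZZ := by
    intro v
    have := hres (fun e => inc v e * l e) ?_ (hvtx v)
    · rw [Finset.sum_filter]
      simpa [inc] using this
    · intro e he
      unfold inc
      split_ifs
      · simpa using hnF e he
      · simp [ZZ.zero_mem]
  set W := Finset.univ.filter (fun v => ∃ e ∈ F, v ∈ e) with hWdef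
  have hW : ∀ e ∈ F, ∀ v ∈ e, v ∈ W := by
    intro e he v hv
    simp only [hWdef, Finset.mem_filter, Finset.mem_univ, true_and]
    exact ⟨e, he, hv⟩
  have hge : ∀ v ∈ W, 2 ≤ (F.filter (fun e => v ∈ e)).card := by
    intro v hv
    obtain ⟨e, he, hve⟩ := (Finset.mem_filter.1 hv).2
    by_contra hlt
    have hmem : e ∈ F.filter (fun e => v ∈ e) := by simp [he, hve]
    have h1 : (F.filter (fun e => v ∈ e)) = {e} := by
      apply Finset.eq_singleton_iff_unique_mem.2 ⟨hmem, ?_⟩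
      intro x hx
      exact Finset.card_le_one.1 (by omega) x hx e hmem
    have h2 := hvtxF v
    rw [h1, Finset.sum_singleton] at h2
    exact (hF e).1 he h2
  have hvan : ∀ μ : Sym2 V → ℝ, (∀ e, e ∉ F → μ e = 0) → ∀ v ∉ W, ∑ e, inc v e * μ e = 0 := by
    intro μ h1 v hv
    apply Finset.sum_eq_zero
    intro e _
    by_cases he : e ∈ F
    · have : v ∉ e := fun h => hv (hW e he v h)
      simp [inc, this]
    · simp [h1 e he]
  have hFW : F.card ≤ W.card := by
    apply card_le_of_indep (fun (v : V) (e : Sym2 V) => inc v e)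
    intro μ h1 h2
    apply hind μ h1
    intro v
    by_cases hv : v ∈ W
    · exact h2 v hv
    · exact hvan μ h1 v hv
  have hdc := double_count F W hd hW
  have hWF : ∑ v ∈ W, 2 ≤ ∑ v ∈ W, (F.filter (fun e => v ∈ e)).card := Finset.sum_le_sum hge
  have hcard : F.card = W.card := by
    rw [hdc] at hWF
    simp at hWF
    omega
  have hdeg : ∀ v ∈ W, (F.filter (fun e => v ∈ e)).card = 2 := by
    have : ∑ v ∈ W, 2 = ∑ v ∈ W, (F.filter (fun e => v ∈ e)).card := by
      rw [hdc]; simp; omega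
    intro v hv
    exact ((Finset.sum_eq_sum_iff_of_le hge).1 this v hv).symm
  -- half-integrality
  have hhalf : ∀ e0 ∈ F, l e0 + l e0 ∈ ZZ := by
    intro e0 he0
    by_contra hnot
    let μ : Sym2 V → ℝ := fun e => if e ∈ F then
      (if l e - l e0 ∈ ZZ then 1 else if l e + l e0 ∈ ZZ then -1 else 0) else 0
    have h1 : ∀ e, e ∉ F → μ e = 0 := by intro e he; simp [μ, he]
    have h0 := hind μ h1 ?_
    · have := congrFun h0 e0
      simp [μ, he0, ZZ.zero_mem] at this
    · intro v
      by_cases hv : v ∈ W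
      · obtain ⟨e, e', hee, hfil⟩ := Finset.card_eq_two.1 (hdeg v hv)
        have hs : ∑ x, inc v x * μ x = ∑ x ∈ F.filter (fun e => v ∈ e), μ x := by
          rw [Finset.sum_filter, ← Finset.sum_subset (Finset.subset_univ F)]
          · simp [inc]
          · intro x _ hx
            simp [h1 x hx]
        have hi := hvtxF v
        rw [hfil, Finset.sum_pair hee] at hi
        rw [hs, hfil, Finset.sum_pair hee]
        have heF : e ∈ F := (Finset.mem_filter.1 (hfil ▸ (by simp : e ∈ ({e, e'} : Finset _)))).1
        have heF' : e' ∈ F := (Finset.mem_filter.1 (hfil ▸ (by simp : e' ∈ ({e, e'} : Finset _)))).1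
        have hA : l e - l e0 ∈ ZZ ↔ l e' + l e0 ∈ ZZ := by
          constructor
          · intro h; have := ZZ.sub_mem hi h; ring_nf at this ⊢; exact this
          · intro h; have := ZZ.sub_mem hi h; ring_nf at this ⊢; exact this
        have hB : l e + l e0 ∈ ZZ ↔ l e' - l e0 ∈ ZZ := by
          constructor
          · intro h; have := ZZ.sub_mem hi h; ring_nf at this ⊢; exact this
          · intro h; have := ZZ.sub_mem hi h; ring_nf at this ⊢; exact this
        have hC : ¬ (l e' + l e0 ∈ ZZ ∧ l e' - l e0 ∈ ZZ) := by
          rintro ⟨h, h'⟩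
          have := ZZ.sub_mem h h'
          apply hnot
          ring_nf at this ⊢
          exact this
        simp only [μ, heF, heF', if_true, hA, hB]
        split_ifs <;> first | (exfalso; tauto) | norm_num
      · exact hvan μ h1 v hv
  have hhalf' : ∀ e0 ∈ F, l e0 - 1 / 2 ∈ ZZ := by
    intro e0 he0
    obtain ⟨z, hz⟩ := mem_ZZ.1 (hhalf e0 he0)
    rcases Int.even_or_odd' z with ⟨k, hk | hk⟩
    · exfalso
      apply (hF e0).1 he0
      rw [mem_ZZ]
      refine ⟨k, ?_⟩
      rw [hk] at hz
      push_cast at hz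
      linarith
    · rw [mem_ZZ]
      refine ⟨k, ?_⟩
      rw [hk] at hz
      push_cast at hz
      linarith
  have heven : Even W.card := by
    have h1 : ∑ e ∈ F, (l e - 1 / 2) ∈ ZZ := ZZ.sum_mem hhalf'
    have h2 := ZZ.sub_mem hsumF h1
    rw [Finset.sum_sub_distrib] at h2
    obtain ⟨z, hz⟩ := mem_ZZ.1 h2
    simp at hz
    rw [hcard] at hz
    have h3 : (W.card : ℝ) = 2 * z := by linarith
    have h4 : (W.card : ℤ) = 2 * z := by exact_mod_cast h3
    rw [← Int.even_coe_nat, h4]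
    simp
  -- cycles
  have hnb : ∀ v, ((fromEdgeSet (F : Set (Sym2 V))).neighborSet v).ncard
      = (F.filter (fun e => v ∈ e)).card := by
    intro v
    rw [← Set.ncard_coe_finset, ← Set.ncard_image_of_injective (f := fun w => s(v, w)) _
      (fun a b h => Sym2.congr_right.1 h)]
    congr 1
    ext e
    simp only [Set.mem_image, mem_neighborSet, fromEdgeSet_adj, Finset.coe_filter, Set.mem_ofPred_eq]
    constructor
    · rintro ⟨w, ⟨h1, h2⟩, rfl⟩
      exact ⟨by simpa using h1, by simp⟩
    · rintro ⟨h1, h2⟩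
      obtain ⟨w, rfl⟩ := h2
      exact ⟨w, ⟨by simpa using h1, by simpa using hd _ h1⟩, rfl⟩
  have hcyc : (fromEdgeSet (F : Set (Sym2 V))).IsCycles := by
    intro v ⟨w, hw⟩
    rw [hnb]
    apply hdeg
    have hw' := ((fromEdgeSet_adj _).1 hw).1
    exact hW s(v, w) (by simpa using hw') v (by simp)
  have hWne : W.Nonempty := by
    rw [← Finset.card_pos, ← hcard, Finset.card_pos]
    exact Finset.nonempty_iff_ne_empty.2 hne
  obtain ⟨v, c, hc, hodd, hcW⟩ := odd_in F W hd hind hWne hdeg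
    (fun e he _ _ _ w hw => hW e he w hw)
  have hscard : c.support.toFinset.card = c.length := by
    rw [cycle_support_toFinset c hc, List.toFinset_card_of_nodup hc.support_nodup]
    simp
  have hsubW : c.support.toFinset ⊆ W := by intro x hx; exact hcW x (by simpa using hx)
  have g1 : (W \ c.support.toFinset).Nonempty := by
    rw [← Finset.card_pos, Finset.card_sdiff_of_subset hsubW, hscard]
    have h1 : c.support.toFinset.card ≤ W.card := Finset.card_le_card hsubW
    rw [hscard] at h1
    grind
  have g2 : ∀ v ∈ W \ c.support.toFinset, (F.filter (fun e => v ∈ e)).card = 2 := by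
    intro v hv
    exact hdeg v (Finset.mem_sdiff.1 hv).1
  have g3 : ∀ e ∈ F, ∀ v ∈ e, v ∈ W \ c.support.toFinset → ∀ w ∈ e,
      w ∈ W \ c.support.toFinset := by
    intro e he a ha haW b hb
    by_cases hab : a = b
    · exact hab ▸ haW
    simp only [Finset.mem_sdiff, List.mem_toFinset] at haW ⊢
    refine ⟨hW e he b hb, fun hbc => haW.2 ?_⟩
    have he' : e = s(a, b) := ((Sym2.mem_and_mem_iff hab).1 ⟨ha, hb⟩)
    have hadj : (fromEdgeSet (F : Set (Sym2 V))).Adj b a := by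
      rw [fromEdgeSet_adj]
      exact ⟨by rw [Sym2.eq_swap, ← he']; exact he, fun h => hab h.symm⟩
    have := (hc.adj_toSubgraph_iff_of_isCycles hcyc (by simpa using hbc) a).2 hadj
    simpa using this.snd_mem
  obtain ⟨w, c', hc', hodd', hcW'⟩ := odd_in F (W \ c.support.toFinset) hd hind g1 g2 g3
  apply hno
  refine ⟨v, w, c.mapLe hHG, c'.mapLe hHG, hc.mapLe hHG, hc'.mapLe hHG, by simpa using hodd,
    by simpa using hodd', ?_⟩
  intro x hx hx'
  rw [Walk.support_mapLe_eq_support] at hx hx'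
  have := hcW' x hx'
  simp [hx] at this

theorem integral_rep {V : Type*} [Fintype V] [DecidableEq V] (G : SimpleGraph V)
    (hno : ¬ ∃ (v w : V) (c : G.Walk v v) (c' : G.Walk w w),
          c.IsCycle ∧ c'.IsCycle ∧ Odd c.length ∧ Odd c'.length ∧
          ∀ x ∈ c.support, x ∉ c'.support) :
    ∀ (k : ℕ) (l : Sym2 V → ℝ) (F : Finset (Sym2 V)), (∀ e, e ∈ F ↔ l e ∉ ZZ) → F.card = k →
    (∀ e, e ∉ G.edgeSet → l e = 0) →
    (∀ v, ∑ e, inc v e * l e ∈ ZZ) → ∑ v, ∑ e, inc v e * l e ∈ ZZ.map (AddMonoidHom.mulLeft 2) →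
    ∃ m : Sym2 V → ℤ, (∀ e, e ∉ G.edgeSet → m e = 0) ∧ ∑ e, |(m e : ℝ)| ≤ ∑ e, |l e| ∧
      ∀ v, ∑ e, inc v e * (m e : ℝ) = ∑ e, inc v e * l e := by
  classical
  intro k
  induction k using Nat.strong_induction_on with
  | _ k ih =>
  intro l F hF hk hsupp hvtx hsum
  by_cases hind : ∀ μ : Sym2 V → ℝ, (∀ e, e ∉ F → μ e = 0) →
      (∀ v, ∑ e, inc v e * μ e = 0) → μ = 0
  · have hs : ∑ e, l e ∈ ZZ := by
      obtain ⟨y, hy, hy2⟩ := hsum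
      have : ∑ v, ∑ e, inc v e * l e = 2 * ∑ e, l e := by
        rw [Finset.sum_comm, Finset.mul_sum]
        apply Finset.sum_congr rfl
        intro e _
        rw [← Finset.sum_mul]
        by_cases he : e ∈ G.edgeSet
        · congr 1
          induction e with | _ a b
          have := sum_mul_inc (fun _ : V => (1 : ℝ)) a b (G.ne_of_adj he)
          simp only [one_mul] at this
          rw [this]; norm_num
        · simp [hsupp e he]
      rw [this] at hy2
      have h3 : y = ∑ e, l e := by
        have h4 : 2 * y = 2 * ∑ e, l e := hy2
        linarith
      exact h3 ▸ hy
    have h0 := core G hno l F hF hsupp hvtx hs hind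
    have h1 : ∀ e, ∃ z : ℤ, l e = z := by
      intro e
      rw [← mem_ZZ]
      by_contra h
      have := (hF e).2 h
      simp [h0] at this
    choose m hm using h1
    refine ⟨m, ?_, ?_, ?_⟩
    · intro e he
      have := hm e
      rw [hsupp e he] at this
      exact_mod_cast this.symm
    · simp [hm]
    · intro v; simp [hm]
  · push Not at hind
    obtain ⟨μ, hμ1, hμ2, hμ0⟩ := hind
    have hμF : ∀ e, μ e ≠ 0 → e ∈ F := by
      intro e he
      by_contra h
      exact he (hμ1 e h)
    obtain ⟨t, ht1, e0, he0, hz⟩ := perturb l μ hμ0 (by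
      intro e he z hz
      exact (hF e).1 (hμF e he) (mem_ZZ.2 ⟨z, hz⟩))
    have hsame : ∀ v, ∑ e, inc v e * (l e + t * μ e) = ∑ e, inc v e * l e := by
      intro v
      have : ∀ e, inc v e * (l e + t * μ e) = inc v e * l e + t * (inc v e * μ e) := by
        intro e; ring
      simp only [this, Finset.sum_add_distrib, ← Finset.mul_sum, hμ2 v, mul_zero, add_zero]
    let F' := Finset.univ.filter (fun e => l e + t * μ e ∉ ZZ)
    have hF'F : F' ⊂ F := by
      rw [Finset.ssubset_iff_of_subset]
      · exact ⟨e0, hμF e0 he0, by simp [F', mem_ZZ, hz]⟩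
      · intro e he
        by_contra h
        have h1 := hμ1 e h
        have h2 : l e ∈ ZZ := by
          by_contra h3
          exact h ((hF e).2 h3)
        simp [F', h1, h2] at he
    obtain ⟨m, h1, h2, h3⟩ := ih F'.card (by rw [← hk]; exact Finset.card_lt_card hF'F)
      (fun e => l e + t * μ e) F' (by intro e; simp [F']) rfl (by
        intro e he
        have : μ e = 0 := by
          by_contra h
          exact (hF e).1 (hμF e h) (by rw [hsupp e he]; exact ZZ.zero_mem)
        simp [this, hsupp e he])
      (by intro v; rw [hsame]; exact hvtx v) (by simp only [hsame]; exact hsum)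
    exact ⟨m, h1, h2.trans ht1, fun v => (h3 v).trans (hsame v)⟩

theorem decompose {V : Type*} [Fintype V] [DecidableEq V] (G : SimpleGraph V) :
    ∀ (N : ℕ) (m : Sym2 V → ℤ), (∀ e, e ∉ G.edgeSet → m e = 0) → ∑ e, |m e| ≤ N →
    ∃ f : Fin N → (V → ℝ), (∀ k, f k = 0 ∨ ∃ e ∈ G.edgeSet,
      (f k = fun v => inc v e) ∨ (f k = fun v => - inc v e)) ∧
      ∀ v, ∑ k, f k v = ∑ e, inc v e * (m e : ℝ) := by
  intro N
  induction N with
  | zero =>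
    intro m h1 h2
    have h3 : ∑ e, |m e| = 0 := le_antisymm (by simpa using h2) (Finset.sum_nonneg (by simp))
    rw [Finset.sum_eq_zero_iff_of_nonneg (by simp)] at h3
    refine ⟨0, fun k => Or.inl rfl, fun v => ?_⟩
    have : ∀ e, m e = 0 := by simpa using h3
    simp [this]
  | succ N ih =>
    intro m h1 h2
    by_cases hm : ∀ e, m e = 0
    · exact ⟨0, fun k => Or.inl rfl, fun v => by simp [hm]⟩
    push Not at hm
    obtain ⟨e0, he0⟩ := hm
    have heG : e0 ∈ G.edgeSet := by
      by_contra h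
      exact he0 (h1 e0 h)
    obtain ⟨s, hs1, hs2⟩ : ∃ s : ℤ, (s = 1 ∨ s = -1) ∧ |m e0 - s| = |m e0| - 1 := by
      rcases lt_or_gt_of_ne he0 with h | h
      · exact ⟨-1, Or.inr rfl, by rw [abs_of_neg h, abs_of_nonpos (by omega)]; omega⟩
      · exact ⟨1, Or.inl rfl, by rw [abs_of_pos h, abs_of_nonneg (by omega)]⟩
    obtain ⟨f, hf1, hf2⟩ := ih (fun e => m e - if e = e0 then s else 0) (by
      intro e he
      have : e ≠ e0 := fun h => he (h ▸ heG)
      simp [this, h1 e he]) (by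
      have : ∀ e, |m e - if e = e0 then s else 0| = |m e| - if e = e0 then 1 else 0 := by
        intro e
        split_ifs with h
        · rw [h, hs2]
        · simp
      simp only [this, Finset.sum_sub_distrib, Finset.sum_ite_eq', Finset.mem_univ, if_true]
      push_cast at h2
      linarith)
    refine ⟨Fin.cons (fun v => inc v e0 * (s : ℝ)) f, ?_, ?_⟩
    · intro k
      refine Fin.cases ?_ ?_ k
      · right
        refine ⟨e0, heG, ?_⟩
        rcases hs1 with h | h
        · left; simp [h]
        · right; simp [h]
      · intro k
        simpa using hf1 k
    · intro v
      rw [Fin.sum_univ_succ]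
      simp only [Fin.cons_zero, Fin.cons_succ, hf2 v]
      push_cast
      simp only [mul_sub, Finset.sum_sub_distrib, mul_ite, mul_zero, Finset.sum_ite_eq',
        Finset.mem_univ, if_true]
      simp

/-- the vectors `±(e_i + e_j)` -/
def edgeVecs {V : Type*} [DecidableEq V] (G : SimpleGraph V) : Set (V → ℝ) :=
  {x | ∃ e ∈ G.edgeSet, (x = fun v => inc v e) ∨ (x = fun v => - inc v e)}

theorem neg_edgeVecs {V : Type*} [DecidableEq V] (G : SimpleGraph V) {x : V → ℝ}
    (hx : x ∈ edgeVecs G) : -x ∈ edgeVecs G := by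
  obtain ⟨e, he, h | h⟩ := hx
  · exact ⟨e, he, Or.inr (by rw [h]; rfl)⟩
  · exact ⟨e, he, Or.inl (by rw [h]; funext v; simp)⟩

theorem zero_mem_hull {V : Type*} [DecidableEq V] (G : SimpleGraph V) (hnb : ¬ G.Colorable 2) :
    (0 : V → ℝ) ∈ convexHull ℝ (edgeVecs G) := by
  obtain ⟨v, c, hc, -⟩ := exists_odd_cycle G hnb
  have hne : ∃ e, e ∈ G.edgeSet := by
    cases c with
    | nil => exact absurd hc (by simp)
    | @cons _ b _ h p => exact ⟨s(v, b), h⟩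
  obtain ⟨e, he⟩ := hne
  have h1 : (fun v => inc v e) ∈ edgeVecs G := ⟨e, he, Or.inl rfl⟩
  have h2 := neg_edgeVecs G h1
  have := (convex_convexHull ℝ (edgeVecs G)) (subset_convexHull ℝ _ h1) (subset_convexHull ℝ _ h2)
    (a := 1/2) (b := 1/2) (by norm_num) (by norm_num) (by norm_num)
  simpa using this

theorem hull_rep {V : Type*} [Fintype V] [DecidableEq V] (G : SimpleGraph V) {x : V → ℝ}
    (hx : x ∈ convexHull ℝ (edgeVecs G)) :
    ∃ l : Sym2 V → ℝ, (∀ e, e ∉ G.edgeSet → l e = 0) ∧ ∑ e, |l e| ≤ 1 ∧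
      ∀ v, x v = ∑ e, inc v e * l e := by
  classical
  let T : Set (V → ℝ) := {x | ∃ l : Sym2 V → ℝ, (∀ e, e ∉ G.edgeSet → l e = 0) ∧
    ∑ e, |l e| ≤ 1 ∧ ∀ v, x v = ∑ e, inc v e * l e}
  have hT : Convex ℝ T := by
    rintro x ⟨l, h1, h2, h3⟩ y ⟨m, k1, k2, k3⟩ a b ha hb hab
    refine ⟨fun e => a * l e + b * m e, ?_, ?_, ?_⟩
    · intro e he; simp [h1 e he, k1 e he]
    · calc ∑ e, |a * l e + b * m e| ≤ ∑ e, (a * |l e| + b * |m e|) := by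
            apply Finset.sum_le_sum
            intro e _
            refine (abs_add_le _ _).trans ?_
            rw [abs_mul, abs_mul, abs_of_nonneg ha, abs_of_nonneg hb]
        _ = a * ∑ e, |l e| + b * ∑ e, |m e| := by
            rw [Finset.sum_add_distrib, Finset.mul_sum, Finset.mul_sum]
        _ ≤ 1 := by nlinarith
    · intro v
      simp only [Pi.add_apply, Pi.smul_apply, smul_eq_mul, h3, k3, Finset.mul_sum]
      rw [← Finset.sum_add_distrib]
      apply Finset.sum_congr rfl
      intro e _
      ring
  have hA : edgeVecs G ⊆ T := by
    rintro x ⟨e, he, rfl | rfl⟩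
    · refine ⟨Pi.single e 1, ?_, ?_, ?_⟩
      · intro e' he'
        have : e' ≠ e := fun h => he' (h ▸ he)
        simp [this]
      · simp [Pi.single_apply, apply_ite abs]
      · intro v; simp [Pi.single_apply]
    · refine ⟨Pi.single e (-1), ?_, ?_, ?_⟩
      · intro e' he'
        have : e' ≠ e := fun h => he' (h ▸ he)
        simp [this]
      · simp [Pi.single_apply, apply_ite abs]
      · intro v; simp [Pi.single_apply]
  exact convexHull_min hA hT hx

/-- coordinates change -/
noncomputable def phi (n : ℕ) : (Fin (n + 1) → ℝ) →ₗ[ℝ] (Fin (n + 1) → ℝ) where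
  toFun y := Fin.cons (2 * y (Fin.last n) - ∑ k : Fin n, y k.castSucc) (fun k => y k.castSucc)
  map_add' x y := by
    funext v
    refine Fin.cases ?_ ?_ v
    · simp [Finset.sum_add_distrib]; ring
    · intro k; simp
  map_smul' a y := by
    funext v
    refine Fin.cases ?_ ?_ v
    · simp [← Finset.mul_sum]; ring
    · intro k; simp

/-- inverse coordinates change -/
noncomputable def psi (n : ℕ) : (Fin (n + 1) → ℝ) →ₗ[ℝ] (Fin (n + 1) → ℝ) where
  toFun x := Fin.snoc (α := fun _ => ℝ) (fun k => x k.succ) ((∑ v, x v) / 2)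
  map_add' x y := by
    funext v
    refine Fin.lastCases ?_ ?_ v
    · simp [Finset.sum_add_distrib]; ring
    · intro k; simp
  map_smul' a y := by
    funext v
    refine Fin.lastCases ?_ ?_ v
    · simp [← Finset.mul_sum]; ring
    · intro k; simp

theorem phi_psi (n : ℕ) (x : Fin (n + 1) → ℝ) : phi n (psi n x) = x := by
  funext v
  refine Fin.cases ?_ ?_ v
  · simp [phi, psi, Fin.sum_univ_succ]; ring
  · intro k; simp [phi, psi]

theorem psi_phi (n : ℕ) (x : Fin (n + 1) → ℝ) : psi n (phi n x) = x := by
  funext v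
  refine Fin.lastCases ?_ ?_ v
  · simp [phi, psi, Fin.sum_univ_succ]
  · intro k; simp [phi, psi]

theorem sum_phi (n : ℕ) (y : Fin (n + 1) → ℝ) : ∑ v, phi n y v = 2 * y (Fin.last n) := by
  simp [phi, Fin.sum_univ_succ]

theorem single_eq_inc {V : Type*} [DecidableEq V] {i j : V} (h : i ≠ j) :
    (Pi.single i 1 + Pi.single j 1 : V → ℝ) = fun v => inc v s(i, j) := by
  funext v
  unfold inc
  by_cases h1 : v = i
  · subst h1; simp [h]
  · by_cases h2 : v = j
    · subst h2; simp [h1]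
    · simp [h1, h2]

theorem psi_inc {n : ℕ} {i j : Fin (n + 1)} (h : i ≠ j) :
    psi n (fun v => inc v s(i, j)) = Fin.snoc (α := fun _ => ℝ) (fun k : Fin n =>
      ((Pi.single i 1 + Pi.single j 1 : Fin (n + 1) → ℝ)) k.succ) (1 : ℝ) := by
  rw [single_eq_inc h]
  have := sum_mul_inc (fun _ : Fin (n + 1) => (1 : ℝ)) i j h
  simp only [one_mul] at this
  simp only [psi, LinearMap.coe_mk, AddHom.coe_mk, this]
  norm_num

theorem snoc_neg_eq {n : ℕ} (p : Fin n → ℝ) :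
    (Fin.snoc (-p) (-1 : ℝ) : Fin (n + 1) → ℝ) = - (Fin.snoc p (1 : ℝ) : Fin (n + 1) → ℝ) := by
  funext v
  refine Fin.lastCases ?_ ?_ v
  · simp
  · intro k; simp

theorem snoc_comb {n : ℕ} (p q : Fin n → ℝ) (a b : ℝ) (hab : a + b = 1) :
    (Fin.snoc (a • p + b • q) (1 : ℝ) : Fin (n + 1) → ℝ) =
      a • (Fin.snoc p (1 : ℝ) : Fin (n + 1) → ℝ) + b • (Fin.snoc q (1 : ℝ) : Fin (n + 1) → ℝ) := by
  funext v
  refine Fin.lastCases ?_ ?_ v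
  · simp [hab]
  · intro k; simp

theorem neg_mem_hull {V : Type*} [DecidableEq V] (G : SimpleGraph V) {x : V → ℝ}
    (hx : x ∈ convexHull ℝ (edgeVecs G)) : -x ∈ convexHull ℝ (edgeVecs G) := by
  have : edgeVecs G ⊆ (-LinearMap.id : (V → ℝ) →ₗ[ℝ] (V → ℝ)) ⁻¹' convexHull ℝ (edgeVecs G) := by
    intro y hy
    exact subset_convexHull ℝ _ (neg_edgeVecs G hy)
  exact convexHull_min this ((convex_convexHull ℝ _).linear_preimage _) hx

theorem mem_Omega_iff {n : ℕ} (G : SimpleGraph (Fin (n + 1))) (y : Fin (n + 1) → ℝ) :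
    y ∈ Omega (fullEdgePolytope G) (fullEdgePolytope G) ↔ phi n y ∈ convexHull ℝ (edgeVecs G) := by
  constructor
  · have htop : ∀ p ∈ fullEdgePolytope G,
        phi n (Fin.snoc p (1 : ℝ)) ∈ convexHull ℝ (edgeVecs G) := by
      let S : Set (Fin n → ℝ) := {p | phi n (Fin.snoc p (1 : ℝ)) ∈ convexHull ℝ (edgeVecs G)}
      have hS : Convex ℝ S := by
        intro p hp q hq a b ha hb hab
        change phi n (Fin.snoc (a • p + b • q) (1 : ℝ)) ∈ convexHull ℝ (edgeVecs G)
        rw [snoc_comb p q a b hab, map_add, map_smul, map_smul]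
        exact convex_convexHull ℝ _ hp hq ha hb hab
      refine fun p hp => convexHull_min (t := S) ?_ hS hp
      rintro p ⟨i, j, hij, rfl⟩
      change phi n (Fin.snoc _ (1 : ℝ)) ∈ convexHull ℝ (edgeVecs G)
      rw [← psi_inc hij.ne, phi_psi]
      exact subset_convexHull ℝ _ ⟨s(i, j), hij, Or.inl rfl⟩
    intro hy
    refine convexHull_min (t := phi n ⁻¹' convexHull ℝ (edgeVecs G)) ?_
      ((convex_convexHull ℝ _).linear_preimage _) hy
    rintro y (⟨p, hp, rfl⟩ | ⟨p, hp, rfl⟩)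
    · exact htop p hp
    · change phi n (Fin.snoc (-p) (-1 : ℝ)) ∈ convexHull ℝ (edgeVecs G)
      rw [snoc_neg_eq, map_neg]
      exact neg_mem_hull G (htop p hp)
  · intro hy
    rw [← psi_phi n y]
    refine convexHull_min (t := psi n ⁻¹' Omega (fullEdgePolytope G) (fullEdgePolytope G)) ?_
      ((convex_convexHull ℝ _).linear_preimage _) hy
    have hp : ∀ i j, G.Adj i j → (fun k : Fin n =>
        ((Pi.single i 1 + Pi.single j 1 : Fin (n + 1) → ℝ)) k.succ) ∈ fullEdgePolytope G :=
      fun i j hij => subset_convexHull ℝ _ ⟨i, j, hij, rfl⟩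
    rintro x ⟨e, he, rfl | rfl⟩
    · induction e with | _ i j
      have hij : G.Adj i j := he
      change psi n _ ∈ Omega (fullEdgePolytope G) (fullEdgePolytope G)
      rw [psi_inc hij.ne]
      exact subset_convexHull ℝ _ (Or.inl ⟨_, hp i j hij, rfl⟩)
    · induction e with | _ i j
      have hij : G.Adj i j := he
      change psi n (-(fun v => inc v s(i, j))) ∈ Omega (fullEdgePolytope G) (fullEdgePolytope G)
      rw [map_neg, psi_inc hij.ne, ← snoc_neg_eq]
      exact subset_convexHull ℝ _ (Or.inr ⟨_, hp i j hij, rfl⟩)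

theorem phi_int {n : ℕ} {y : Fin (n + 1) → ℝ} (hy : IsLatticePt y) (v : Fin (n + 1)) :
    phi n y v ∈ ZZ := by
  have hy' : ∀ i, y i ∈ ZZ := fun i => mem_ZZ.2 (hy i)
  refine Fin.cases ?_ ?_ v
  · have := ZZ.sub_mem (ZZ.add_mem (hy' (Fin.last n)) (hy' (Fin.last n)))
      (ZZ.sum_mem (t := Finset.univ) (fun (k : Fin n) _ => hy' k.castSucc))
    rw [← two_mul] at this
    simpa [phi] using this
  · intro k
    simpa [phi] using hy' k.castSucc

theorem psi_int {n : ℕ} {x : Fin (n + 1) → ℝ} (hx : ∀ v, x v ∈ ZZ) (hs : (∑ v, x v) / 2 ∈ ZZ) :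
    IsLatticePt (psi n x) := by
  intro i
  rw [← mem_ZZ]
  refine Fin.lastCases ?_ ?_ i
  · simpa [psi] using hs
  · intro k; simpa [psi] using hx k.succ

theorem inc_int {V : Type*} [DecidableEq V] (v : V) (e : Sym2 V) : inc v e ∈ ZZ := by
  unfold inc
  split_ifs
  · exact mem_ZZ.2 ⟨1, by simp⟩
  · exact ZZ.zero_mem

theorem idp_of_no {n : ℕ} (G : SimpleGraph (Fin (n + 1))) (hnb : ¬ G.Colorable 2)
    (hno : ¬ ∃ (v w : Fin (n + 1)) (c : G.Walk v v) (c' : G.Walk w w),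
          c.IsCycle ∧ c'.IsCycle ∧ Odd c.length ∧ Odd c'.length ∧
          ∀ x ∈ c.support, x ∉ c'.support) :
    HasIDP (Omega (fullEdgePolytope G) (fullEdgePolytope G)) := by
  classical
  rintro N hN y ⟨y', hy', rfl⟩ hlat
  rw [mem_Omega_iff] at hy'
  obtain ⟨l, h1, h2, h3⟩ := hull_rep G hy'
  have hx : ∀ v, phi n ((N : ℝ) • y') v = ∑ e, inc v e * ((N : ℝ) * l e) := by
    intro v
    rw [map_smul, Pi.smul_apply, h3 v, smul_eq_mul, Finset.mul_sum]
    apply Finset.sum_congr rfl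
    intro e _
    ring
  obtain ⟨m, m1, m2, m3⟩ := integral_rep G hno _ (fun e => (N : ℝ) * l e)
    (Finset.univ.filter fun e => (N : ℝ) * l e ∉ ZZ) (by simp) rfl
    (by intro e he; simp [h1 e he])
    (by intro v; rw [← hx v]; exact phi_int hlat v)
    (by
      simp only [← hx]
      rw [sum_phi]
      exact ⟨_, mem_ZZ.2 (hlat (Fin.last n)), rfl⟩)
  have m4 : ∑ e, |m e| ≤ (N : ℤ) := by
    have h5 : ∑ e, |(N : ℝ) * l e| ≤ N := by
      simp only [abs_mul, Nat.abs_cast, ← Finset.mul_sum]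
      nlinarith [(Nat.cast_nonneg N : (0 : ℝ) ≤ N)]
    have := m2.trans h5
    exact_mod_cast this
  obtain ⟨f, f1, f2⟩ := decompose G N m m1 m4
  refine ⟨fun k => psi n (f k), ?_, ?_⟩
  · intro k
    change psi n (f k) ∈ _ ∧ IsLatticePt (psi n (f k))
    rw [mem_Omega_iff, phi_psi]
    rcases f1 k with h | ⟨e, he, h⟩
    · rw [h]
      refine ⟨zero_mem_hull G hnb, ?_⟩
      rw [map_zero]
      exact fun i => ⟨0, by simp⟩
    · refine ⟨subset_convexHull ℝ _ ⟨e, he, h⟩, ?_⟩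
      have hs : ∑ v, inc v e = 2 := by
        induction e with | _ i j
        have := sum_mul_inc (fun _ : Fin (n + 1) => (1 : ℝ)) i j (G.ne_of_adj he)
        simp only [one_mul] at this
        rw [this]; norm_num
      rcases h with h | h
      · rw [h]
        apply psi_int
        · intro v; exact inc_int v e
        · exact mem_ZZ.2 ⟨1, by rw [hs]; norm_num⟩
      · rw [h]
        apply psi_int
        · intro v; exact ZZ.neg_mem (inc_int v e)
        · exact mem_ZZ.2 ⟨-1, by rw [Finset.sum_neg_distrib, hs]; norm_num⟩
  · rw [← map_sum]
    have : ∑ k, f k = phi n ((N : ℝ) • y') := by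
      funext v
      rw [Finset.sum_apply, f2 v, m3 v, hx v]
    rw [this, psi_phi]

theorem walk_sum {V : Type*} [DecidableEq V] {G : SimpleGraph V} {u w : V} (p : G.Walk u w) (v : V) :
    (p.edges.map (fun e => inc v e)).sum + (if v = u then 1 else 0) + (if v = w then 1 else 0) =
      2 * (p.support.count v : ℝ) := by
  induction p with
  | @nil a =>
    by_cases h : v = a
    · subst h; simp; norm_num
    · simp [h, Ne.symm h]
  | @cons a b c h p ih =>
    have h1 : inc v s(a, b) = (if v = a then 1 else 0) + (if v = b then 1 else 0) := by
      rw [← congrFun (single_eq_inc h.ne) v]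
      simp [Pi.single_apply]
    simp only [Walk.edges_cons, List.map_cons, List.sum_cons, Walk.support_cons, List.count_cons]
    rw [h1]
    push_cast
    have h2 : (((if (a == v) = true then 1 else 0 : ℕ)) : ℝ) = if v = a then 1 else 0 := by
      by_cases h : v = a
      · simp [h]
      · simp [h, Ne.symm h]
    push_cast at h2
    rw [h2]
    linarith

theorem cycle_sum {V : Type*} [DecidableEq V] {G : SimpleGraph V} {u : V} (p : G.Walk u u)
    (hp : p.IsCycle) (v : V) :
    (p.edges.map (fun e => inc v e)).sum = 2 * (if v ∈ p.support then 1 else 0) := by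
  have h := walk_sum p v
  have h2 : (p.support.count v) = (if v = u then 1 else 0) + (if v ∈ p.support then 1 else 0) := by
    have h3 : v ∈ p.support ↔ v ∈ p.support.tail := by
      rw [← List.mem_toFinset, cycle_support_toFinset p hp, List.mem_toFinset]
    have h4 : p.support.tail.count v = if v ∈ p.support then 1 else 0 := by
      simp only [h3]
      exact List.Nodup.count hp.support_nodup
    rw [← h4]
    conv_lhs => rw [← Walk.cons_tail_support]
    rw [List.count_cons]
    by_cases h : v = u
    · simp [h, add_comm]
    · simp [h, Ne.symm h]
  rw [h2] at h
  push_cast at h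
  linarith

open scoped Pointwise in
theorem list_mem {W E : Type*} [AddCommGroup W] [Module ℝ W] (C : Set W) (hC : Convex ℝ C)
    (hne : C.Nonempty) (l : List E) (g : E → W) (h : ∀ e ∈ l, g e ∈ C) :
    (l.map g).sum ∈ (l.length : ℝ) • C := by
  induction l with
  | nil => simp [Set.zero_smul_set hne]
  | cons a l ih =>
    simp only [List.map_cons, List.sum_cons, List.length_cons]
    push_cast
    rw [add_comm (l.length : ℝ) 1, hC.add_smul (by norm_num) (by positivity), one_smul]
    exact Set.add_mem_add (h a (by simp)) (ih (fun e he => h e (by simp [he])))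

theorem hull_le {V : Type*} [Fintype V] [DecidableEq V] (G : SimpleGraph V) (t : V → ℝ) (K : ℝ)
    (h : ∀ i j, G.Adj i j → t i + t j ≤ K ∧ -(t i + t j) ≤ K) {x : V → ℝ}
    (hx : x ∈ convexHull ℝ (edgeVecs G)) : ∑ v, t v * x v ≤ K := by
  let S : Set (V → ℝ) := {x | ∑ v, t v * x v ≤ K}
  have hS : Convex ℝ S := by
    intro x hx y hy a b ha hb hab
    simp only [S, Set.mem_ofPred_eq] at hx hy ⊢
    have : ∑ v, t v * (a • x + b • y) v = a * ∑ v, t v * x v + b * ∑ v, t v * y v := by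
      simp only [Pi.add_apply, Pi.smul_apply, smul_eq_mul, Finset.mul_sum]
      rw [← Finset.sum_add_distrib]
      apply Finset.sum_congr rfl
      intro e _
      ring
    rw [this]
    calc _ ≤ a * K + b * K := by gcongr
      _ = K := by rw [← add_mul, hab, one_mul]
  refine convexHull_min (t := S) ?_ hS hx
  rintro x ⟨e, he, rfl | rfl⟩
  · induction e with | _ i j
    change ∑ v, t v * inc v s(i, j) ≤ K
    rw [sum_mul_inc t i j (G.ne_of_adj he)]
    exact (h i j he).1
  · induction e with | _ i j
    change ∑ v, t v * (-inc v s(i, j)) ≤ K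
    simp only [mul_neg, Finset.sum_neg_distrib]
    rw [sum_mul_inc t i j (G.ne_of_adj he)]
    exact (h i j he).2

theorem support_card {V : Type*} [Fintype V] [DecidableEq V] {H : SimpleGraph V} {v : V}
    (c : H.Walk v v) (hc : c.IsCycle) :
    ∑ x, (if x ∈ c.support then (1 : ℝ) else 0) = c.length := by
  have : (Finset.univ.filter fun x => x ∈ c.support) = c.support.tail.toFinset := by
    rw [← cycle_support_toFinset c hc]
    ext x
    simp
  rw [Finset.sum_boole, this, List.toFinset_card_of_nodup hc.support_nodup]
  simp

theorem no_of_idp {n : ℕ} (G : SimpleGraph (Fin (n + 1)))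
    (hidp : HasIDP (Omega (fullEdgePolytope G) (fullEdgePolytope G)))
    (v w : Fin (n + 1)) (c : G.Walk v v) (c' : G.Walk w w) (hc : c.IsCycle) (hc' : c'.IsCycle)
    (hodd : Odd c.length) (hodd' : Odd c'.length) (hdis : ∀ x ∈ c.support, x ∉ c'.support) :
    False := by
  classical
  set C := convexHull ℝ (edgeVecs G) with hC
  set χ : Fin (n + 1) → ℝ := fun x => if x ∈ c.support then 1 else 0 with hχ
  set χ' : Fin (n + 1) → ℝ := fun x => if x ∈ c'.support then 1 else 0 with hχ'
  set s : Fin (n + 1) → ℝ := fun x => χ x - χ' x with hs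
  have hcases : ∀ x, (x ∈ c.support ∧ χ x = 1 ∧ χ' x = 0 ∧ s x = 1) ∨
      (x ∉ c.support ∧ χ x = 0 ∧ χ' x = 1 ∧ s x = -1) ∨
      (x ∉ c.support ∧ χ x = 0 ∧ χ' x = 0 ∧ s x = 0) := by
    intro x
    by_cases h1 : x ∈ c.support
    · have h2 := hdis x h1
      left
      simp [hs, hχ, hχ', h1, h2]
    · by_cases h2 : x ∈ c'.support
      · right; left
        simp [hs, hχ, hχ', h1, h2]
      · right; right
        simp [hs, hχ, hχ', h1, h2]
  have hsum1 : ∑ x, χ x = c.length := support_card c hc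
  have hsum2 : ∑ x, χ' x = c'.length := support_card c' hc'
  obtain ⟨a, ha⟩ := hodd
  obtain ⟨b, hb⟩ := hodd'
  set N := a + b + 1 with hN
  -- membership
  have hmem : ∃ z ∈ C, s = (N : ℝ) • z := by
    let l : List (Fin (n + 1) → ℝ) := c.edges.map (fun e v => inc v e) ++
      c'.edges.map (fun e v => - inc v e)
    have hl : ∀ x ∈ l, x ∈ C := by
      intro x hx
      rcases List.mem_append.1 hx with h | h
      · obtain ⟨e, he, rfl⟩ := List.mem_map.1 h
        exact subset_convexHull ℝ _ ⟨e, c.edges_subset_edgeSet he, Or.inl rfl⟩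
      · obtain ⟨e, he, rfl⟩ := List.mem_map.1 h
        exact subset_convexHull ℝ _ ⟨e, c'.edges_subset_edgeSet he, Or.inr rfl⟩
    have hlen : l.length = 2 * N := by
      simp [l, ha, hb, hN]; ring
    have hlne : l ≠ [] := by
      intro h
      rw [h] at hlen
      simp at hlen
    obtain ⟨x0, hx0⟩ := List.exists_mem_of_ne_nil l hlne
    obtain ⟨z, hz, hz2⟩ := list_mem C (convex_convexHull ℝ _) ⟨x0, hl x0 hx0⟩ l id hl
    refine ⟨z, hz, ?_⟩
    funext x
    have h1 : (l.map id).sum x = 2 * s x := by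
      have h2 := map_list_sum (Pi.evalAddMonoidHom (fun _ : Fin (n + 1) => ℝ) x) (l.map id)
      simp only [Pi.evalAddMonoidHom_apply] at h2
      rw [h2]
      simp only [l, List.map_append, List.map_map, List.sum_append]
      have h3 := cycle_sum c hc x
      have h4 := cycle_sum c' hc' x
      have h5 : (c'.edges.map (fun e => - inc x e)).sum = - (c'.edges.map (fun e => inc x e)).sum := by
        induction c'.edges with
        | nil => simp
        | cons e t ih => simp [ih]; ring
      calc _ = (c.edges.map (fun e => inc x e)).sum + (c'.edges.map (fun e => - inc x e)).sum := rfl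
        _ = 2 * s x := by
          rw [h5, h3, h4]
          simp only [hs, hχ, hχ']
          ring
    have h2 := congrFun hz2 x
    simp only [Pi.smul_apply, smul_eq_mul] at h2 ⊢
    rw [h1, hlen] at h2
    push_cast at h2 ⊢
    linarith
  obtain ⟨z, hz, hsz⟩ := hmem
  have hsint : ∀ x, s x ∈ ZZ := by
    intro x
    rw [mem_ZZ]
    rcases hcases x with h | h | h
    · exact ⟨1, by simp [h.2.2.2]⟩
    · exact ⟨-1, by simp [h.2.2.2]⟩
    · exact ⟨0, by simp [h.2.2.2]⟩
  obtain ⟨f, hf1, hf2⟩ := hidp N (by omega) (psi n s)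
    ⟨psi n z, by rw [mem_Omega_iff, phi_psi]; exact hz, by rw [hsz, map_smul]⟩
    (psi_int hsint (by
      rw [mem_ZZ]
      refine ⟨(a : ℤ) - b, ?_⟩
      simp only [hs, Finset.sum_sub_distrib, hsum1, hsum2, ha, hb]
      push_cast
      ring))
  set g : Fin N → Fin (n + 1) → ℝ := fun k => phi n (f k) with hg
  have hgC : ∀ k, g k ∈ C := fun k => (mem_Omega_iff G _).1 (hf1 k).1
  have hgint : ∀ k x, g k x ∈ ZZ := fun k x => phi_int (hf1 k).2 x
  have hgs : ∀ x, s x = ∑ k, g k x := by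
    intro x
    have := congrArg (phi n) hf2
    rw [phi_psi, map_sum] at this
    rw [this, Finset.sum_apply]
  have hsum_swap : ∀ t : Fin (n + 1) → ℝ, ∑ x, t x * s x = ∑ k, ∑ x, t x * g k x := by
    intro t
    rw [Finset.sum_comm]
    apply Finset.sum_congr rfl
    intro x _
    rw [hgs x, Finset.mul_sum]
  have hle2 : ∀ k, ∑ x, s x * g k x ≤ 2 := by
    intro k
    apply hull_le G s 2 _ (hgC k)
    intro i j _
    rcases hcases i with hi | hi | hi <;> rcases hcases j with hj | hj | hj <;>
      constructor <;> linarith [hi.2.2.2, hj.2.2.2]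
  have htot : ∑ x, s x * s x = 2 * N := by
    have : ∀ x, s x * s x = χ x + χ' x := by
      intro x
      rcases hcases x with h | h | h <;> rw [h.2.1, h.2.2.1, h.2.2.2] <;> norm_num
    simp only [this, Finset.sum_add_distrib, hsum1, hsum2, ha, hb, hN]
    push_cast
    ring
  have heq2 : ∀ k, ∑ x, s x * g k x = 2 := by
    have h1 : ∑ k, ∑ x, s x * g k x = ∑ k : Fin N, (2 : ℝ) := by
      rw [← hsum_swap, htot]
      simp [mul_comm]
    intro k
    exact (Finset.sum_eq_sum_iff_of_le (fun k _ => hle2 k)).1 h1 k (Finset.mem_univ k)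
  have hpos : ∀ k, ∀ x ∈ c.support, 0 ≤ g k x := by
    intro k x hx
    have := hull_le G (fun y => s y - (if y = x then 1 else 0)) 2 ?_ (hgC k)
    · simp only [sub_mul, Finset.sum_sub_distrib, heq2 k, ite_mul, one_mul, zero_mul,
        Finset.sum_ite_eq', Finset.mem_univ, if_true] at this
      linarith
    · intro i j hij
      have hne := hij.ne
      have hd : ∀ y, (if y = x then (1 : ℝ) else 0) = 0 ∨
          ((if y = x then (1 : ℝ) else 0) = 1 ∧ y = x) := by
        intro y; split_ifs with h <;> simp [h]
      rcases hd i with di | ⟨di, di'⟩ <;> rcases hd j with dj | ⟨dj, dj'⟩ <;>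
      rcases hcases i with hi | hi | hi <;> rcases hcases j with hj | hj | hj <;>
      rw [di, dj, hi.2.2.2, hj.2.2.2] <;>
      first
      | (constructor <;> norm_num; done)
      | (exfalso; subst di'; first | exact hi.1 hx | exact hne dj'.symm)
      | (exfalso; subst dj'; exact hj.1 hx)
  have hdbl : ∀ k, ∀ x ∈ c.support, 2 * g k x ≤ ∑ y, χ y * g k y := by
    intro k x hx
    have := hull_le G (fun y => 4 * s y + 2 * (if y = x then 1 else 0) - χ y) 8 ?_ (hgC k)
    · simp only [sub_mul, add_mul, mul_assoc, Finset.sum_sub_distrib, Finset.sum_add_distrib,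
        ← Finset.mul_sum, heq2 k, ite_mul, one_mul, zero_mul,
        Finset.sum_ite_eq', Finset.mem_univ, if_true] at this
      linarith
    · intro i j hij
      have hne := hij.ne
      have hd : ∀ y, (if y = x then (1 : ℝ) else 0) = 0 ∨
          ((if y = x then (1 : ℝ) else 0) = 1 ∧ y = x) := by
        intro y; split_ifs with h <;> simp [h]
      rcases hd i with di | ⟨di, di'⟩ <;> rcases hd j with dj | ⟨dj, dj'⟩ <;>
      rcases hcases i with hi | hi | hi <;> rcases hcases j with hj | hj | hj <;>
      rw [di, dj, hi.2.2.2, hj.2.2.2, hi.2.1, hj.2.1] <;>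
      first
      | (constructor <;> norm_num; done)
      | (exfalso; subst di'; first | exact hi.1 hx | exact hne dj'.symm)
      | (exfalso; subst dj'; exact hj.1 hx)
  have hale : ∀ k, ∑ y, χ y * g k y ≤ 2 := by
    intro k
    apply hull_le G χ 2 _ (hgC k)
    intro i j _
    rcases hcases i with hi | hi | hi <;> rcases hcases j with hj | hj | hj <;>
      constructor <;> linarith [hi.2.1, hj.2.1]
  have hterm : ∀ k y, 0 ≤ χ y * g k y := by
    intro k y
    rcases hcases y with h | h | h
    · rw [h.2.1, one_mul]; exact hpos k y h.1
    · rw [h.2.1, zero_mul]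
    · rw [h.2.1, zero_mul]
  have hpar : ∀ k, ∃ m : ℤ, ∑ y, χ y * g k y = 2 * m := by
    intro k
    have h0 : 0 ≤ ∑ y, χ y * g k y := Finset.sum_nonneg (fun y _ => hterm k y)
    have hI : ∑ y, χ y * g k y ∈ ZZ := by
      apply ZZ.sum_mem
      intro y _
      rcases hcases y with h | h | h
      · rw [h.2.1, one_mul]; exact hgint k y
      · rw [h.2.1, zero_mul]; exact ZZ.zero_mem
      · rw [h.2.1, zero_mul]; exact ZZ.zero_mem
    obtain ⟨m, hm⟩ := mem_ZZ.1 hI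
    have h2 := hale k
    rw [hm] at h0 h2
    have h0' : 0 ≤ m := by exact_mod_cast h0
    have h2' : m ≤ 2 := by exact_mod_cast h2
    have h3 : m = 0 ∨ m = 1 ∨ m = 2 := by omega
    rcases h3 with h | h | h
    · exact ⟨0, by rw [hm, h]; simp⟩
    · exfalso
      subst h
      have : ∑ y, χ y * g k y ≤ 0 := by
        apply Finset.sum_nonpos
        intro y _
        rcases hcases y with h | h | h
        · rw [h.2.1, one_mul]
          have h5 := hdbl k y h.1
          rw [hm] at h5
          obtain ⟨q, hq⟩ := mem_ZZ.1 (hgint k y)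
          rw [hq] at h5 ⊢
          have h6 : 2 * q ≤ 1 := by exact_mod_cast h5
          have h7 : q ≤ 0 := by omega
          exact_mod_cast h7
        · rw [h.2.1, zero_mul]
        · rw [h.2.1, zero_mul]
      rw [hm] at this
      norm_num at this
    · exact ⟨1, by rw [hm, h]; norm_num⟩
  choose m hm using hpar
  have hfin := hsum_swap χ
  simp only [hm, ← Finset.mul_sum] at hfin
  have h8 : ∑ x, χ x * s x = c.length := by
    rw [← hsum1]
    apply Finset.sum_congr rfl
    intro x _
    rcases hcases x with h | h | h <;> rw [h.2.1, h.2.2.2] <;> norm_num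
  rw [h8, ha] at hfin
  have h9 : ((2 * a + 1 : ℕ) : ℤ) = 2 * ∑ k, m k := by exact_mod_cast hfin
  omega

end OmegaAux

end OmegaAuxSection

theorem stmt12 (n : ℕ) (G : SimpleGraph (Fin (n + 1)))
    (hconn : G.Connected) (hnb : ¬ G.Colorable 2) :
    HasIDP (Omega (fullEdgePolytope G) (fullEdgePolytope G)) ↔
      ¬ ∃ (v w : Fin (n + 1)) (c : G.Walk v v) (c' : G.Walk w w),
          c.IsCycle ∧ c'.IsCycle ∧ Odd c.length ∧ Odd c'.length ∧
          ∀ x ∈ c.support, x ∉ c'.support := by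
  constructor
  · rintro h ⟨v, w, c, c', hc, hc', ho, ho', hd⟩
    exact OmegaAux.no_of_idp G h v w c c' hc hc' ho ho' hd
  · intro h
    exact OmegaAux.idp_of_no G hnb h
end
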